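/- arXiv:2311.03249 — 3 statements merged into one kernel-verified Lean document; each statement's English description precedes it below -/
import Mathlib

section
/- Let c be an edge-colouring of a clique K_k using exactly s' colours and let s be an integer with s > s'. Then for every ξ > 0 there exists N such that for all n ≥ N, h_{s+1}(n, c) ≤ h_s(n, c)^{1+ξ}. -/
/-!
Two bounds are combined.

**Upper bound.** Let `χ` be a `c'`-free `s`-colouring of `K_n` with `homNum χ = h`. The last colour
does not occur in the pattern, so recolouring some of its edges with a new colour creates no copy of
the pattern. Every set of `h + 1` vertices spans an edge of the last colour, so, by peeling off
maximal sets without that colour, a set of `j * h` vertices spans at least `h * j * (j - 1) / 2` such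
edges (`edges_lower`). Splitting the last colour at random, a union bound over all sets of
`h * (2 * L + 4)` vertices, where `n ≤ 2 ^ L`, shows that for some splitting all of them see both
halves (`exists_split`). Hence `h_{s+1}(n) ≤ h_s(n) * O(log n)` (`hMin_succ_le`).

**Lower bound.** It remains to see that `log n ≤ h_s(n) ^ o(1)`, which is the Erdős–Hajnal argument.
In a `c'`-free colouring, a greedy embedding of the pattern must get stuck (`embed_or_sparse`), and
this yields large disjoint sets `A`, `B` and a colour `i` such that each vertex of `A` sends few
edges of colour `i` to `B`. Let `f_i(S)` be the largest size of a subset of `S` without colour `i`.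
If all of these are at most `t`, then `f_i(S) ≥ f_i(A) + f_i(B')` for some `B' ⊆ B` with
`|B'| ≥ |B| / 2`, so that `∏ f_i` is superadditive, and
`∏ f_i(S) ≥ 2 ^ m` as soon as `|S| ≥ D ^ m`, with `D` polynomial in `t` (`two_pow_le_prod`). Since
the product is at most `t ^ s`, this gives `log n = O((1 + log t) ^ 2)` for `t = h_s(n)`.
-/

/-- A set `X` is homogeneous for an edge-colouring `c` of `K_n` with colours in `Fin s`
if some colour does not appear on pairs of distinct elements of `X`. -/
def IsHomog {n s : ℕ} (c : Sym2 (Fin n) → Fin s) (X : Finset (Fin n)) : Prop :=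
  ∃ i : Fin s, ∀ x ∈ X, ∀ y ∈ X, x ≠ y → c s(x, y) ≠ i

/-- `homNum c` is the maximum size of a homogeneous set of the colouring `c`. -/
noncomputable def homNum {n s : ℕ} (c : Sym2 (Fin n) → Fin s) : ℕ :=
  sSup {m | ∃ X : Finset (Fin n), IsHomog c X ∧ X.card = m}

/-- `c` contains a copy of the pattern `c'` (colours compared via their indices). -/
def HasCopy {n s k s' : ℕ} (c : Sym2 (Fin n) → Fin s) (c' : Sym2 (Fin k) → Fin s') : Prop :=
  ∃ φ : Fin k ↪ Fin n, ∀ x y : Fin k, x ≠ y →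
    ((c s(φ x, φ y) : ℕ) = (c' s(x, y) : ℕ))

/-- `hMin n s c'` is the minimum of `homNum c` over all `c'`-free
`s`-edge-colourings `c` of `K_n`. -/
noncomputable def hMin (n s : ℕ) {k s' : ℕ} (c' : Sym2 (Fin k) → Fin s') : ℕ :=
  sInf {m | ∃ c : Sym2 (Fin n) → Fin s, ¬ HasCopy c c' ∧ homNum c = m}

/-- The colouring `c'` uses all `s'` colours (on pairs of distinct vertices). -/
def UsesAllColours {k s' : ℕ} (c' : Sym2 (Fin k) → Fin s') : Prop :=
  ∀ i : Fin s', ∃ x y : Fin k, x ≠ y ∧ c' s(x, y) = i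

/-- `NoCol χ i X`: the colour `i` does not appear on pairs of distinct elements of `X`. -/
def NoCol {V C : Type*} (χ : Sym2 V → C) (i : C) (X : Finset V) : Prop :=
  ∀ x ∈ X, ∀ y ∈ X, x ≠ y → χ s(x, y) ≠ i

open Classical in
/-- The largest size of a subset of `S` in which the colour `i` does not appear. -/
noncomputable def avoidNum {V C : Type*} (χ : Sym2 V → C) (i : C) (S : Finset V) : ℕ :=
  (S.powerset.filter (NoCol χ i)).sup Finset.card

open Classical in
/-- The edges of colour `i` spanned by `X`. -/
noncomputable def colEdges {V C : Type*} [Fintype V] (χ : Sym2 V → C) (i : C) (X : Finset V) :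
    Finset (Sym2 V) :=
  Finset.univ.filter (fun e => ¬ e.IsDiag ∧ χ e = i ∧ ∀ v ∈ e, v ∈ X)

/-! ### Homogeneous sets -/

lemma NoCol.mono {V C : Type*} {χ : Sym2 V → C} {i : C} {X Y : Finset V} (h : NoCol χ i Y)
    (hXY : X ⊆ Y) : NoCol χ i X :=
  fun x hx y hy hxy => h x (hXY hx) y (hXY hy) hxy

lemma le_avoidNum {V C : Type*} {χ : Sym2 V → C} {i : C} {X S : Finset V} (h : NoCol χ i X)
    (hXS : X ⊆ S) : X.card ≤ avoidNum χ i S := by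
  classical
  unfold avoidNum
  exact Finset.le_sup (f := Finset.card) (by simp [hXS, h])

lemma exists_avoidNum {V C : Type*} (χ : Sym2 V → C) (i : C) (S : Finset V) :
    ∃ X, X ⊆ S ∧ NoCol χ i X ∧ X.card = avoidNum χ i S := by
  classical
  unfold avoidNum
  obtain ⟨X, hX, h⟩ := Finset.exists_mem_eq_sup (S.powerset.filter (NoCol χ i))
    ⟨∅, by simp [NoCol]⟩ Finset.card
  simp only [Finset.mem_filter, Finset.mem_powerset] at hX
  exact ⟨X, hX.1, hX.2, h.symm⟩

lemma avoidNum_mono {V C : Type*} (χ : Sym2 V → C) (i : C) {S T : Finset V} (h : S ⊆ T) :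
    avoidNum χ i S ≤ avoidNum χ i T := by
  obtain ⟨X, hX, hn, hc⟩ := exists_avoidNum χ i S
  rw [← hc]
  exact le_avoidNum hn (hX.trans h)

lemma avoidNum_pos {V C : Type*} (χ : Sym2 V → C) (i : C) {S : Finset V} (h : S.Nonempty) :
    1 ≤ avoidNum χ i S := by
  obtain ⟨x, hx⟩ := h
  have : NoCol χ i {x} := by
    intro a ha b hb hab
    simp only [Finset.mem_singleton] at ha hb
    exact absurd (ha.trans hb.symm) hab
  simpa using le_avoidNum this (Finset.singleton_subset_iff.2 hx)

lemma card_le_homNum {n s : ℕ} (χ : Sym2 (Fin n) → Fin s) {i : Fin s} {X : Finset (Fin n)}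
    (h : NoCol χ i X) : X.card ≤ homNum χ := by
  refine le_csSup ⟨n, ?_⟩ ⟨X, ⟨i, h⟩, rfl⟩
  rintro m ⟨Y, -, rfl⟩
  simpa using Y.card_le_univ

lemma homNum_le {n s b : ℕ} (χ : Sym2 (Fin n) → Fin s)
    (h : ∀ i X, NoCol χ i X → X.card ≤ b) : homNum χ ≤ b := by
  refine csSup_le' ?_
  rintro m ⟨Y, ⟨i, hi⟩, rfl⟩
  exact h i Y hi

/-! ### Splitting the last colour -/

/-- A Turán-type bound: `X` contains a maximal set `I` without colour `i`; each vertex of `X \ I`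
sends an edge of colour `i` to `I`, and one continues with `X \ I`. -/
lemma edges_lower {V C : Type*} [Fintype V] (χ : Sym2 V → C) (i : C) (h : ℕ)
    (hh : ∀ X, NoCol χ i X → X.card ≤ h) (j : ℕ) :
    ∀ X : Finset V, j * h ≤ X.card → h * (j * (j - 1)) ≤ 2 * (colEdges χ i X).card := by
  classical
  induction j with
  | zero => intro X _; simp
  | succ j ih =>
    intro X hX
    obtain ⟨I, hIX, hI, hIc⟩ := exists_avoidNum χ i X
    have hIh := hh I hI
    have hsd : (X \ I).card = X.card - I.card := Finset.card_sdiff_of_subset hIX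
    have hjX : j * h ≤ (X \ I).card := by
      rw [hsd]; rw [Nat.add_mul] at hX; omega
    have hdeg : ∀ v : V, ∃ w : V, v ∈ X \ I → w ∈ I ∧ v ≠ w ∧ χ s(v, w) = i := by
      intro v
      by_cases hv : v ∈ X \ I
      · by_contra! hcon
        have hcon' : ∀ w ∈ I, v ≠ w → χ s(v, w) ≠ i := fun w hw hvw => (hcon w).2 hw hvw
        rw [Finset.mem_sdiff] at hv
        have hno : NoCol χ i (insert v I) := by
          intro x hx y hy hxy
          rw [Finset.mem_insert] at hx hy
          rcases hx with rfl | hx <;> rcases hy with rfl | hy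
          · exact absurd rfl hxy
          · exact hcon' y hy hxy
          · rw [Sym2.eq_swap]; exact hcon' x hx hxy.symm
          · exact hI x hx y hy hxy
        have := le_avoidNum hno (Finset.insert_subset hv.1 hIX)
        rw [Finset.card_insert_of_notMem hv.2] at this
        omega
      · exact ⟨v, fun h => absurd h hv⟩
    choose g hg using hdeg
    have hinj : Set.InjOn (fun v => s(v, g v)) (X \ I : Finset V) := by
      intro a ha b hb hab
      have ha' := hg a ha
      have hb' := hg b hb
      simp only [Finset.coe_sdiff, Set.mem_sdiff, Finset.mem_coe] at ha hb
      simp only [Sym2.eq_iff] at hab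
      rcases hab with h | h
      · exact h.1
      · exact absurd (h.1 ▸ hb'.1) ha.2
    have hcard := Finset.card_image_of_injOn hinj
    have hdisj : Disjoint (colEdges χ i (X \ I)) ((X \ I).image (fun v => s(v, g v))) := by
      rw [Finset.disjoint_left]
      intro e he he'
      rw [Finset.mem_image] at he'
      obtain ⟨v, hv, rfl⟩ := he'
      simp only [colEdges, Finset.mem_filter, Finset.mem_univ, true_and] at he
      have := he.2.2 (g v) (Sym2.mem_mk_right _ _)
      exact (Finset.mem_sdiff.1 this).2 (hg v hv).1
    have hsub : colEdges χ i (X \ I) ∪ (X \ I).image (fun v => s(v, g v)) ⊆ colEdges χ i X := by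
      intro e he
      simp only [colEdges, Finset.mem_filter, Finset.mem_univ, true_and]
      rw [Finset.mem_union] at he
      rcases he with he | he
      · simp only [colEdges, Finset.mem_filter, Finset.mem_univ, true_and] at he
        exact ⟨he.1, he.2.1, fun v hv => (Finset.mem_sdiff.1 (he.2.2 v hv)).1⟩
      · rw [Finset.mem_image] at he
        obtain ⟨v, hv, rfl⟩ := he
        obtain ⟨h1, h2, h3⟩ := hg v hv
        refine ⟨by simpa using h2, h3, ?_⟩
        intro u hu
        rw [Sym2.mem_iff] at hu
        rcases hu with rfl | rfl
        · exact (Finset.mem_sdiff.1 hv).1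
        · exact hIX h1
    have h1 := Finset.card_le_card hsub
    rw [Finset.card_union_of_disjoint hdisj, hcard] at h1
    have h2 := ih _ hjX
    have h3 : h * ((j + 1) * (j + 1 - 1)) = h * (j * (j - 1)) + 2 * (j * h) := by
      cases j with
      | zero => simp
      | succ j => simp only [Nat.add_sub_cancel]; ring
    omega

/-- The union bound: some set `G` of edges neither contains nor misses all the edges of colour `i`
spanned by any vertex set of the given size. -/
lemma exists_split {n : ℕ} {C : Type*} (χ : Sym2 (Fin n) → C) (i : C) (h L : ℕ) (hpos : 1 ≤ h)
    (hn : n ≤ 2 ^ L) (hh : ∀ X, NoCol χ i X → X.card ≤ h) :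
    ∃ G : Finset (Sym2 (Fin n)), ∀ X : Finset (Fin n), X.card = h * (2 * L + 4) →
      ¬ colEdges χ i X ⊆ G ∧ ¬ Disjoint G (colEdges χ i X) := by
  classical
  by_contra! hcon
  set m := h * (2 * L + 4) with hm
  set N := Fintype.card (Sym2 (Fin n)) with hN
  set e := L * m + 2 with he
  have hE : ∀ X : Finset (Fin n), X.card = m → e ≤ (colEdges χ i X).card := by
    intro X hX
    have := edges_lower χ i h hh (2 * L + 4) X (by rw [hX, hm, mul_comm])
    have h2 : 2 * e ≤ h * ((2 * L + 4) * (2 * L + 4 - 1)) := by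
      have : 2 * L + 4 - 1 = 2 * L + 3 := by omega
      rw [this, he, hm]
      nlinarith
    omega
  have hcov : (Finset.univ : Finset (Finset (Sym2 (Fin n)))) ⊆
      (Finset.powersetCard m (Finset.univ : Finset (Fin n))).biUnion
        (fun X => Finset.Icc (colEdges χ i X) Finset.univ ∪ (colEdges χ i X)ᶜ.powerset) := by
    intro G _
    obtain ⟨X, hX, hG⟩ := hcon G
    rw [Finset.mem_biUnion]
    refine ⟨X, by simp [Finset.mem_powersetCard, hX], ?_⟩
    rw [Finset.mem_union]
    by_cases hs : colEdges χ i X ⊆ G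
    · left; simp [hs]
    · right
      rw [Finset.mem_powerset]
      exact Finset.subset_compl_iff_disjoint_right.2 (hG hs)
  have h1 := Finset.card_le_card hcov
  have h2 := h1.trans (Finset.card_biUnion_le_card_mul _ _ (2 * 2 ^ (N - e)) (by
    intro X hX
    have hXm : X.card = m := (Finset.mem_powersetCard.1 hX).2
    refine (Finset.card_union_le _ _).trans ?_
    rw [Finset.card_Icc_finset (Finset.subset_univ _), Finset.card_powerset, Finset.card_compl,
      Finset.card_univ, ← two_mul]
    have := hE X hXm
    gcongr
    · norm_num))
  rw [Finset.card_univ, Fintype.card_finset, Finset.card_powersetCard, Finset.card_univ,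
    Fintype.card_fin, ← hN] at h2
  have hch : n.choose m ≤ 2 ^ (L * m) := by
    calc n.choose m ≤ n ^ m := Nat.choose_le_pow _ _
      _ ≤ (2 ^ L) ^ m := Nat.pow_le_pow_left hn m
      _ = 2 ^ (L * m) := (pow_mul _ _ _).symm
  by_cases hne : ∃ X : Finset (Fin n), X.card = m
  · obtain ⟨X, hX⟩ := hne
    have heN : e ≤ N := (hE X hX).trans (Finset.card_le_univ _)
    have h3 : 2 ^ N ≤ 2 ^ (L * m) * (2 * 2 ^ (N - e)) :=
      h2.trans (Nat.mul_le_mul_right _ hch)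
    have h4 : 2 ^ (L * m) * (2 * 2 ^ (N - e)) = 2 ^ (L * m + 1 + (N - e)) := by ring
    rw [h4] at h3
    have := (Nat.pow_le_pow_iff_right (by norm_num : 1 < 2)).1 h3
    omega
  · obtain ⟨X, hX, -⟩ := hcon ∅
    exact hne ⟨X, hX⟩

/-- From a pattern-free `s`-colouring, splitting the last colour gives a pattern-free
`(s+1)`-colouring whose homogeneous sets are larger by a logarithmic factor at most. -/
lemma split_colouring {n k s s' : ℕ} (c : Sym2 (Fin k) → Fin s') (hs : s' < s) (L : ℕ)
    (hn : n ≤ 2 ^ L) (χ : Sym2 (Fin n) → Fin s) (hχ : ¬ HasCopy χ c) (hpos : 1 ≤ homNum χ) :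
    ∃ χ' : Sym2 (Fin n) → Fin (s + 1), ¬ HasCopy χ' c ∧
      homNum χ' ≤ homNum χ * (2 * L + 4) := by
  classical
  have hs1 : s - 1 < s := by omega
  set last : Fin s := ⟨s - 1, hs1⟩ with hlast
  obtain ⟨G, hG⟩ := exists_split χ last (homNum χ) L hpos hn (fun X hX => card_le_homNum χ hX)
  set χ' : Sym2 (Fin n) → Fin (s + 1) := fun e =>
    if χ e = last ∧ e ∈ G then Fin.last s else (χ e).castSucc with hχ'
  have hmono : homNum χ ≤ homNum χ * (2 * L + 4) := Nat.le_mul_of_pos_right _ (by omega)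
  refine ⟨χ', ?_, ?_⟩
  · rintro ⟨φ, hφ⟩
    refine hχ ⟨φ, fun x y hxy => ?_⟩
    have h := hφ x y hxy
    have hlt := (c s(x, y)).isLt
    simp only [hχ'] at h
    split_ifs at h with hc
    · simp only [Fin.val_last] at h; omega
    · simpa using h
  · apply homNum_le
    intro i X hX
    by_contra! hbig
    -- A set of exactly the size treated by `exists_split`.
    obtain ⟨Y, hYX, hYc⟩ := Finset.exists_subset_card_eq hbig.le
    have hY := hX.mono hYX
    obtain ⟨hY1, hY2⟩ := hG Y hYc
    have hmem : ∀ e ∈ colEdges χ last Y, χ e = last ∧ χ' e ≠ i := by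
      intro e he
      simp only [colEdges, Finset.mem_filter, Finset.mem_univ, true_and] at he
      refine ⟨he.2.1, ?_⟩
      induction e with
      | _ x y =>
        refine hY x (he.2.2 x (by simp)) y (he.2.2 y (by simp)) ?_
        simpa using he.1
    rcases Fin.eq_castSucc_or_eq_last i with ⟨j, rfl⟩ | rfl
    · by_cases hj : j = last
      · subst hj
        refine hY1 (fun e he => ?_)
        obtain ⟨h1, h2⟩ := hmem e he
        by_contra hne
        exact h2 (by simp [hχ', hne, h1])
      · have hno : NoCol χ j X := by
          intro x hx y hy hxy hcol
          refine hX x hx y hy hxy ?_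
          simp [hχ', hcol, hj]
        have := card_le_homNum χ hno
        omega
    · refine hY2 ?_
      rw [Finset.disjoint_right]
      intro e he heG
      obtain ⟨h1, h2⟩ := hmem e he
      exact h2 (by simp [hχ', heG, h1])

/-- Merging the last two colours of a pattern-free colouring keeps it pattern-free. -/
lemma merge_colouring {n k s s' : ℕ} (c : Sym2 (Fin k) → Fin s') (hs : s' < s)
    (χ : Sym2 (Fin n) → Fin (s + 1)) (hχ : ¬ HasCopy χ c) :
    ∃ χ' : Sym2 (Fin n) → Fin s, ¬ HasCopy χ' c := by
  refine ⟨fun e => ⟨min (χ e : ℕ) (s - 1), by omega⟩, ?_⟩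
  rintro ⟨φ, hφ⟩
  refine hχ ⟨φ, fun x y hxy => ?_⟩
  have h := hφ x y hxy
  have hlt := (c s(x, y)).isLt
  simp only at h
  omega

lemma homNum_pos {n s : ℕ} (χ : Sym2 (Fin n) → Fin s) (hn : 1 ≤ n) (hs : 1 ≤ s) :
    1 ≤ homNum χ := by
  have : NoCol χ ⟨0, hs⟩ {(⟨0, hn⟩ : Fin n)} := by
    intro a ha b hb hab
    simp only [Finset.mem_singleton] at ha hb
    exact absurd (ha.trans hb.symm) hab
  simpa using card_le_homNum χ this

/-- Either `h_{s+1}(n) = 0` because there are no pattern-free colourings, or `h_s(n)` is attained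
and `h_{s+1}(n)` is larger by a logarithmic factor at most. -/
lemma hMin_succ_le {n k s s' : ℕ} (c : Sym2 (Fin k) → Fin s') (hs : s' < s) (hn : 1 ≤ n) :
    hMin n (s + 1) c = 0 ∨
    ((∃ χ : Sym2 (Fin n) → Fin s, ¬ HasCopy χ c ∧ homNum χ = hMin n s c) ∧
      hMin n (s + 1) c ≤ hMin n s c * (2 * Nat.log 2 n + 6)) := by
  by_cases hne : ∃ χ : Sym2 (Fin n) → Fin s, ¬ HasCopy χ c
  · right
    have hmem : hMin n s c ∈ {m | ∃ χ : Sym2 (Fin n) → Fin s, ¬ HasCopy χ c ∧ homNum χ = m} := by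
      obtain ⟨χ, hχ⟩ := hne
      exact Nat.sInf_mem ⟨_, χ, hχ, rfl⟩
    refine ⟨hmem, ?_⟩
    obtain ⟨χ, hχ, hm⟩ := hmem
    obtain ⟨χ', h1, h2⟩ := split_colouring c hs (Nat.log 2 n + 1)
      (Nat.lt_pow_succ_log_self (by norm_num) n).le χ hχ (homNum_pos χ hn (by omega))
    have h3 : hMin n (s + 1) c ≤ homNum χ' := Nat.sInf_le ⟨χ', h1, rfl⟩
    rw [hm] at h2
    refine h3.trans (h2.trans (le_of_eq ?_))
    ring
  · left
    unfold hMin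
    rw [Nat.sInf_eq_zero]
    right
    rw [Set.eq_empty_iff_forall_notMem]
    rintro m ⟨χ, hχ, -⟩
    exact hne (merge_colouring c hs χ hχ)

/-! ### Embedding the pattern -/

/-- Greedy embedding of the pattern `p` on the index set `T` into disjoint vertex sets `W i`: either
it succeeds, or there are large sets `A`, `B` and a colour `a` such that each vertex of `A` is
joined in colour `a` to at most a proportion `1/q` of `B`. -/
lemma embed_or_sparse {V ι C : Type*} [DecidableEq V] [DecidableEq ι] [DecidableEq C] [Nonempty V]
    (χ : Sym2 V → C) (p : Sym2 ι → C) (q K M : ℕ) (hq : 1 ≤ q) (hM : 1 ≤ M) (T : Finset ι) :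
    ∀ W : ι → Finset V, T.card ≤ K →
      (∀ i ∈ T, ∀ j ∈ T, i ≠ j → Disjoint (W i) (W j)) →
      (∀ i ∈ T, (q * K) ^ T.card * M ≤ (W i).card) →
      (∃ φ : ι → V, (∀ i ∈ T, φ i ∈ W i) ∧
        ∀ i ∈ T, ∀ j ∈ T, i ≠ j → χ s(φ i, φ j) = p s(i, j)) ∨
      (∃ (A B : Finset V) (a : C), (∃ i ∈ T, A ⊆ W i) ∧ (∃ i ∈ T, B ⊆ W i) ∧ Disjoint A B ∧
        M ≤ A.card ∧ M ≤ B.card ∧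
        ∀ x ∈ A, q * (B.filter (fun y => χ s(x, y) = a)).card ≤ B.card) := by
  induction T using Finset.induction_on with
  | empty =>
    intro W _ _ _
    left
    exact ⟨fun _ => Classical.arbitrary V, by simp, by simp⟩
  | insert a T ha ih =>
    intro W hK hdis hsize
    rw [Finset.card_insert_of_notMem ha] at hK hsize
    have hK1 : 1 ≤ K := by omega
    have hQ : 1 ≤ q * K := Nat.mul_pos hq hK1
    have hQp : 1 ≤ (q * K) ^ T.card := Nat.one_le_pow _ _ hQ
    have hbig : K * M ≤ (q * K) ^ (T.card + 1) * M := by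
      refine Nat.mul_le_mul_right _ ?_
      rw [pow_succ]
      nlinarith [Nat.mul_le_mul hQp (Nat.mul_le_mul_right K hq)]
    have hMle : M ≤ K * M := Nat.le_mul_of_pos_left _ hK1
    have hneq : ∀ l ∈ T, a ≠ l := fun l hl h => ha (h ▸ hl)
    by_cases hv : ∃ v ∈ W a, ∀ l ∈ T,
        (W l).card < q * ((W l).filter (fun y => χ s(v, y) = p s(a, l))).card
    · obtain ⟨v, hvW, hv⟩ := hv
      set W' : ι → Finset V := fun l => (W l).filter (fun y => χ s(v, y) = p s(a, l)) with hW'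
      have hsub : ∀ l, W' l ⊆ W l := fun l => Finset.filter_subset _ _
      rcases ih W' (by omega) (by
          intro i hi j hj hij
          exact (hdis i (Finset.mem_insert_of_mem hi) j (Finset.mem_insert_of_mem hj) hij).mono
            (hsub i) (hsub j))
        (by
          intro i hi
          have h1 := hsize i (Finset.mem_insert_of_mem hi)
          have h2 := hv i hi
          have h3 : q * ((q * K) ^ T.card * M) ≤ (q * K) ^ (T.card + 1) * M := by
            rw [pow_succ]
            calc q * ((q * K) ^ T.card * M) = q * ((q * K) ^ T.card * M) * 1 := by ring
              _ ≤ q * ((q * K) ^ T.card * M) * K := Nat.mul_le_mul_left _ hK1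
              _ = _ := by ring
          exact Nat.le_of_mul_le_mul_left ((h3.trans h1).trans h2.le) hq) with h | h
      · obtain ⟨φ, h1, h2⟩ := h
        left
        have hφ : ∀ i ∈ T, Function.update φ a v i = φ i := fun i hi =>
          Function.update_of_ne (hneq i hi).symm _ _
        have hcol : ∀ i ∈ T, χ s(v, φ i) = p s(a, i) := fun i hi =>
          (Finset.mem_filter.1 (h1 i hi)).2
        refine ⟨Function.update φ a v, ?_, ?_⟩
        · intro i hi
          rcases Finset.mem_insert.1 hi with rfl | hi
          · simpa using hvW
          · rw [hφ i hi]; exact hsub i (h1 i hi)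
        · intro i hi j hj hij
          rcases Finset.mem_insert.1 hi with rfl | hi' <;>
            rcases Finset.mem_insert.1 hj with rfl | hj'
          · exact absurd rfl hij
          · rw [hφ j hj', Function.update_self]; exact hcol j hj'
          · rw [hφ i hi', Function.update_self, Sym2.eq_swap, Sym2.eq_swap (a := i)]
            exact hcol i hi'
          · rw [hφ i hi', hφ j hj']; exact h2 i hi' j hj' hij
      · obtain ⟨A, B, b, ⟨i, hi, hA⟩, ⟨j, hj, hB⟩, h⟩ := h
        right
        exact ⟨A, B, b, ⟨i, Finset.mem_insert_of_mem hi, hA.trans (hsub i)⟩,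
          ⟨j, Finset.mem_insert_of_mem hj, hB.trans (hsub j)⟩, h⟩
    · right
      push Not at hv
      -- Every vertex of `W a` is bad for some `l`; the most frequent `l` gives `A`.
      have hcov : W a ⊆ T.biUnion (fun l => (W a).filter (fun v =>
          q * ((W l).filter (fun y => χ s(v, y) = p s(a, l))).card ≤ (W l).card)) := by
        intro v hvW
        obtain ⟨l, hl, h⟩ := hv v hvW
        rw [Finset.mem_biUnion]
        exact ⟨l, hl, Finset.mem_filter.2 ⟨hvW, h⟩⟩
      have hWa := hsize a (Finset.mem_insert_self _ _)
      have hex : ∃ l ∈ T, M ≤ ((W a).filter (fun v =>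
          q * ((W l).filter (fun y => χ s(v, y) = p s(a, l))).card ≤ (W l).card)).card := by
        by_contra! hcon
        have h1 := (Finset.card_le_card hcov).trans
          (Finset.card_biUnion_le_card_mul _ _ (M - 1) (fun l hl => by
            have := hcon l hl; omega))
        have h2 : T.card * (M - 1) ≤ K * (M - 1) := Nat.mul_le_mul_right _ (by omega)
        have h3 : K * (M - 1) < K * M := Nat.mul_lt_mul_of_pos_left (by omega) hK1
        omega
      obtain ⟨l, hl, hA⟩ := hex
      refine ⟨_, W l, p s(a, l), ⟨a, Finset.mem_insert_self _ _, Finset.filter_subset _ _⟩,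
        ⟨l, Finset.mem_insert_of_mem hl, subset_rfl⟩, ?_, hA, ?_, ?_⟩
      · exact (hdis a (Finset.mem_insert_self _ _) l (Finset.mem_insert_of_mem hl)
          (hneq l hl)).mono_left (Finset.filter_subset _ _)
      · have := hsize l (Finset.mem_insert_of_mem hl)
        omega
      · intro x hx
        exact (Finset.mem_filter.1 hx).2

lemma exists_disjoint_family {V ι : Type*} [DecidableEq V] [DecidableEq ι] (L : ℕ) (T : Finset ι) :
    ∀ S : Finset V, T.card * L ≤ S.card → ∃ W : ι → Finset V,
      (∀ i ∈ T, W i ⊆ S ∧ (W i).card = L) ∧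
      (∀ i ∈ T, ∀ j ∈ T, i ≠ j → Disjoint (W i) (W j)) := by
  induction T using Finset.induction_on with
  | empty => intro S _; exact ⟨fun _ => ∅, by simp, by simp⟩
  | insert a T ha ih =>
    intro S hS
    rw [Finset.card_insert_of_notMem ha, Nat.add_mul, one_mul] at hS
    obtain ⟨X, hXS, hX⟩ := Finset.exists_subset_card_eq (show L ≤ S.card by omega)
    have hsd := Finset.card_sdiff_of_subset hXS
    obtain ⟨W, h1, h2⟩ := ih (S \ X) (by omega)
    have hW : ∀ i ∈ T, Function.update W a X i = W i := fun i hi =>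
      Function.update_of_ne (ne_of_mem_of_not_mem hi ha) _ _
    have hd : ∀ i ∈ T, Disjoint X (W i) := fun i hi =>
      Finset.disjoint_sdiff.mono_right (h1 i hi).1
    refine ⟨Function.update W a X, ?_, ?_⟩
    · intro i hi
      rcases Finset.mem_insert.1 hi with rfl | hi
      · simp [hXS, hX]
      · rw [hW i hi]; exact ⟨(h1 i hi).1.trans Finset.sdiff_subset, (h1 i hi).2⟩
    · intro i hi j hj hij
      rcases Finset.mem_insert.1 hi with rfl | hi' <;>
        rcases Finset.mem_insert.1 hj with rfl | hj'
      · exact absurd rfl hij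
      · rw [hW j hj', Function.update_self]; exact hd j hj'
      · rw [hW i hi', Function.update_self]; exact (hd i hi').symm
      · rw [hW i hi', hW j hj']; exact h2 i hi' j hj' hij

/-! ### The lower bound on homogeneous sets -/

/-- In a pattern-free colouring, every large set contains a sparse pair for some colour. -/
lemma sparse_pair {n k s s' : ℕ} (c : Sym2 (Fin k) → Fin s') (hs : s' < s)
    (χ : Sym2 (Fin n) → Fin s) (hχ : ¬ HasCopy χ c) (hn : 1 ≤ n) (q M : ℕ) (hq : 1 ≤ q)
    (hM : 1 ≤ M) (S : Finset (Fin n)) (hS : (k + 1) * ((q * (k + 1)) ^ (k + 1) * M) ≤ S.card) :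
    ∃ (A B : Finset (Fin n)) (a : Fin s), A ⊆ S ∧ B ⊆ S ∧ Disjoint A B ∧
      M ≤ A.card ∧ M ≤ B.card ∧
      ∀ x ∈ A, q * (B.filter (fun y => χ s(x, y) = a)).card ≤ B.card := by
  have : Nonempty (Fin n) := ⟨⟨0, hn⟩⟩
  have hk : (Finset.univ : Finset (Fin k)).card = k := by simp
  obtain ⟨W, hW1, hW2⟩ := exists_disjoint_family ((q * (k + 1)) ^ (k + 1) * M)
    (Finset.univ : Finset (Fin k)) S (by
      rw [hk]; exact (Nat.mul_le_mul_right _ (by omega)).trans hS)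
  rcases embed_or_sparse χ (fun e => Fin.castLE hs.le (c e)) q (k + 1) M hq hM Finset.univ W
    (by rw [hk]; omega) hW2 (by
      intro i hi
      rw [(hW1 i hi).2, hk]
      refine Nat.mul_le_mul_right _ (Nat.pow_le_pow_right ?_ (by omega))
      exact Nat.mul_pos hq (by omega)) with h | h
  · exfalso
    obtain ⟨φ, h1, h2⟩ := h
    have hinj : Function.Injective φ := by
      intro i j hij
      by_contra hne
      have hd := hW2 i (Finset.mem_univ _) j (Finset.mem_univ _) hne
      exact Finset.disjoint_left.1 hd (h1 i (Finset.mem_univ _))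
        (hij ▸ h1 j (Finset.mem_univ _))
    refine hχ ⟨⟨φ, hinj⟩, fun x y hxy => ?_⟩
    have := h2 x (Finset.mem_univ _) y (Finset.mem_univ _) hxy
    simp [this]
  · obtain ⟨A, B, a, ⟨i, hi, hA⟩, ⟨j, hj, hB⟩, h⟩ := h
    exact ⟨A, B, a, hA.trans (hW1 i hi).1, hB.trans (hW1 j hj).1, h⟩

/-- Superadditivity of the product of the `avoidNum`s, given that colour `i` is superadditive. -/
lemma prod_superadd {s : ℕ} (i : Fin s) (f g F : Fin s → ℕ) (hi : f i + g i ≤ F i)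
    (hf : ∀ j, f j ≤ F j) (hg : ∀ j, g j ≤ F j) :
    ∏ j, f j + ∏ j, g j ≤ ∏ j, F j := by
  rw [← Finset.mul_prod_erase Finset.univ f (Finset.mem_univ i),
    ← Finset.mul_prod_erase Finset.univ g (Finset.mem_univ i),
    ← Finset.mul_prod_erase Finset.univ F (Finset.mem_univ i)]
  have h1 : ∏ j ∈ Finset.univ.erase i, f j ≤ ∏ j ∈ Finset.univ.erase i, F j :=
    Finset.prod_le_prod' (fun j _ => hf j)
  have h2 : ∏ j ∈ Finset.univ.erase i, g j ≤ ∏ j ∈ Finset.univ.erase i, F j :=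
    Finset.prod_le_prod' (fun j _ => hg j)
  calc _ ≤ f i * ∏ j ∈ Finset.univ.erase i, F j + g i * ∏ j ∈ Finset.univ.erase i, F j :=
        Nat.add_le_add (Nat.mul_le_mul_left _ h1) (Nat.mul_le_mul_left _ h2)
    _ = (f i + g i) * ∏ j ∈ Finset.univ.erase i, F j := by ring
    _ ≤ _ := Nat.mul_le_mul_right _ hi

/-- The factor by which the size of the vertex set drops in one step of the recursion. -/
def dropFactor (k t : ℕ) : ℕ := (k + 1) * (2 * t * (k + 1)) ^ (k + 1) * 2

lemma two_pow_le_prod {n k s s' : ℕ} (c : Sym2 (Fin k) → Fin s') (hs : s' < s)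
    (χ : Sym2 (Fin n) → Fin s) (hχ : ¬ HasCopy χ c) (hn : 1 ≤ n) (t : ℕ) (ht : 1 ≤ t)
    (hhom : ∀ i X, NoCol χ i X → X.card ≤ t) (m : ℕ) :
    ∀ S : Finset (Fin n), dropFactor k t ^ m ≤ S.card → 2 ^ m ≤ ∏ j, avoidNum χ j S := by
  have hD : 1 ≤ dropFactor k t := by unfold dropFactor; exact Nat.succ_le_of_lt (by positivity)
  induction m with
  | zero =>
    intro S hS
    rw [pow_zero] at hS ⊢
    exact Finset.one_le_prod' (fun j _ => avoidNum_pos χ j (Finset.card_pos.1 hS))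
  | succ m ih =>
    intro S hS
    have hDm : 1 ≤ dropFactor k t ^ m := Nat.one_le_pow _ _ hD
    obtain ⟨A, B, i, hAS, hBS, hAB, hA, hB, hsp⟩ := sparse_pair c hs χ hχ hn (2 * t)
      (2 * dropFactor k t ^ m) (by omega) (by omega) S (by
        refine le_trans (le_of_eq ?_) hS
        rw [pow_succ]
        conv_rhs => rw [dropFactor.eq_1 k t]
        rw [dropFactor.eq_1 k t]
        ring)
    obtain ⟨X, hXA, hX, hXc⟩ := exists_avoidNum χ i A
    have hXt := hhom i X hX
    set R := X.biUnion (fun x => B.filter (fun y => χ s(x, y) = i)) with hR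
    -- Few vertices of `B` are joined to `X` in colour `i`, since `X` has at most `t` elements.
    have hRc : 2 * R.card ≤ B.card := by
      have h1 : 2 * t * R.card ≤ X.card * B.card := by
        calc 2 * t * R.card
            ≤ 2 * t * ∑ x ∈ X, (B.filter (fun y => χ s(x, y) = i)).card :=
              Nat.mul_le_mul_left _ Finset.card_biUnion_le
          _ = ∑ x ∈ X, 2 * t * (B.filter (fun y => χ s(x, y) = i)).card := Finset.mul_sum _ _ _
          _ ≤ ∑ x ∈ X, B.card := Finset.sum_le_sum (fun x hx => hsp x (hXA hx))
          _ = X.card * B.card := by simp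
      have h2 : t * (2 * R.card) ≤ t * B.card := by
        calc t * (2 * R.card) = 2 * t * R.card := by ring
          _ ≤ X.card * B.card := h1
          _ ≤ t * B.card := Nat.mul_le_mul_right _ hXt
      exact Nat.le_of_mul_le_mul_left h2 ht
    have hRB : R ⊆ B := by
      intro y hy
      obtain ⟨x, -, hy⟩ := Finset.mem_biUnion.1 hy
      exact (Finset.mem_filter.1 hy).1
    have hsd := Finset.card_sdiff_of_subset hRB
    have hPA := ih A (by omega)
    have hPB := ih (B \ R) (by omega)
    have hBRS : B \ R ⊆ S := Finset.sdiff_subset.trans hBS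
    have hadd : avoidNum χ i A + avoidNum χ i (B \ R) ≤ avoidNum χ i S := by
      obtain ⟨Y, hYB, hY, hYc⟩ := exists_avoidNum χ i (B \ R)
      rw [← hXc, ← hYc]
      have hdXY : Disjoint X Y := hAB.mono hXA (hYB.trans Finset.sdiff_subset)
      rw [← Finset.card_union_of_disjoint hdXY]
      have hXY : ∀ x ∈ X, ∀ y ∈ Y, χ s(x, y) ≠ i := by
        intro x hx y hy hcol
        obtain ⟨hyB, hyR⟩ := Finset.mem_sdiff.1 (hYB hy)
        exact hyR (Finset.mem_biUnion.2 ⟨x, hx, Finset.mem_filter.2 ⟨hyB, hcol⟩⟩)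
      refine le_avoidNum ?_ (Finset.union_subset (hXA.trans hAS) (hYB.trans hBRS))
      intro x hx y hy hxy
      rcases Finset.mem_union.1 hx with hx | hx <;> rcases Finset.mem_union.1 hy with hy | hy
      · exact hX x hx y hy hxy
      · exact hXY x hx y hy
      · rw [Sym2.eq_swap]; exact hXY y hy x hx
      · exact hY x hx y hy hxy
    have := prod_superadd i (fun j => avoidNum χ j A) (fun j => avoidNum χ j (B \ R))
      (fun j => avoidNum χ j S) hadd (fun j => avoidNum_mono χ j hAS)
      (fun j => avoidNum_mono χ j hBRS)
    rw [pow_succ]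
    omega

lemma two_pow_le_homNum_pow {n k s s' : ℕ} (c : Sym2 (Fin k) → Fin s') (hs : s' < s)
    (χ : Sym2 (Fin n) → Fin s) (hχ : ¬ HasCopy χ c) (hn : 1 ≤ n) (m : ℕ)
    (hm : dropFactor k (homNum χ) ^ m ≤ n) : 2 ^ m ≤ homNum χ ^ s := by
  refine (two_pow_le_prod c hs χ hχ hn (homNum χ) (homNum_pos χ hn (by omega))
    (fun i X hX => card_le_homNum χ hX) m Finset.univ (by simpa using hm)).trans ?_
  calc ∏ j, avoidNum χ j Finset.univ ≤ ∏ _j : Fin s, homNum χ := by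
        refine Finset.prod_le_prod' (fun j _ => ?_)
        obtain ⟨X, -, hX, hXc⟩ := exists_avoidNum χ j Finset.univ
        rw [← hXc]
        exact card_le_homNum χ hX
    _ = homNum χ ^ s := by simp

/-- The bound `log n = O((1 + log t) ^ 2)` for the homogeneous number `t` of a pattern-free colouring. -/
lemma log_le {n k s s' : ℕ} (c : Sym2 (Fin k) → Fin s') (hs : s' < s)
    (χ : Sym2 (Fin n) → Fin s) (hχ : ¬ HasCopy χ c) (hn : 1 ≤ n) :
    Real.log n ≤ (2 * s * Real.log (homNum χ) + 1) *
      (Real.log (dropFactor k 1) + (k + 1) * Real.log (homNum χ)) := by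
  set t := homNum χ with htdef
  have ht : 1 ≤ t := homNum_pos χ hn (by omega)
  have ht0 : (0 : ℝ) < t := by exact_mod_cast ht
  have hD2 : 1 < dropFactor k t := by
    have h1 : 0 < (k + 1) * (2 * t * (k + 1)) ^ (k + 1) := by positivity
    unfold dropFactor; omega
  set D := dropFactor k t with hDdef
  set m := Nat.log D n with hmdef
  have h1 : D ^ m ≤ n := Nat.pow_log_le_self D (by omega)
  have h2 : n < D ^ (m + 1) := Nat.lt_pow_succ_log_self hD2 n
  have h3 := two_pow_le_homNum_pow c hs χ hχ hn m h1
  rw [← htdef] at h3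
  have hlogt : 0 ≤ Real.log t := Real.log_nonneg (by exact_mod_cast ht)
  have hlogD : Real.log D = Real.log (dropFactor k 1) + (k + 1) * Real.log t := by
    have h4 : (D : ℝ) = dropFactor k 1 * (t : ℝ) ^ (k + 1) := by
      rw [hDdef]; unfold dropFactor; push_cast
      rw [show (2 * (t : ℝ) * (k + 1)) = 2 * 1 * (k + 1) * t by ring, mul_pow _ (t : ℝ)]
      ring
    have h5 : (dropFactor k 1 : ℝ) ≠ 0 := by
      unfold dropFactor; positivity
    rw [h4, Real.log_mul h5 (by positivity), Real.log_pow]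
    push_cast; ring
  have hm : (m : ℝ) ≤ 2 * s * Real.log t := by
    have h4 : (2 : ℝ) ^ m ≤ (t : ℝ) ^ s := by exact_mod_cast h3
    have h5 := Real.log_le_log (by positivity) h4
    rw [Real.log_pow, Real.log_pow] at h5
    have h6 := Real.log_two_gt_d9
    have : (0 : ℝ) ≤ m := Nat.cast_nonneg m
    nlinarith
  rw [← hlogD]
  have hn0 : (0 : ℝ) < n := by exact_mod_cast hn
  have h4 : Real.log n ≤ Real.log ((D : ℝ) ^ (m + 1)) :=
    Real.log_le_log hn0 (by exact_mod_cast h2.le)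
  rw [Real.log_pow] at h4
  have hD0 : 0 ≤ Real.log D := Real.log_nonneg (by exact_mod_cast hD2.le)
  refine h4.trans (mul_le_mul_of_nonneg_right ?_ hD0)
  push_cast
  linarith

/-! ### Asymptotics -/

lemma eventually_log_sq_le (α a b ξ : ℝ) (hξ : 0 < ξ) :
    ∀ᶠ x : ℝ in Filter.atTop,
      4 * ((α * Real.log x + 1) * (a + b * Real.log x)) + 6 ≤ x ^ ξ := by
  have hξ2 : 0 < ξ / 2 := by linarith
  have hlog := isLittleO_log_rpow_atTop hξ2
  have hconst : ∀ (d r : ℝ), 0 < r → (fun _ : ℝ => d) =o[Filter.atTop] (fun x : ℝ => x ^ r) := by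
    intro d r hr
    rw [Asymptotics.isLittleO_const_left]
    right
    exact tendsto_norm_atTop_atTop.comp (tendsto_rpow_atTop hr)
  have h1 := (hlog.const_mul_left α).add (hconst 1 _ hξ2)
  have h2 := (hconst a _ hξ2).add (hlog.const_mul_left b)
  have h3 := h1.mul h2
  have h4 : (fun x : ℝ => x ^ (ξ / 2) * x ^ (ξ / 2)) =ᶠ[Filter.atTop] (fun x : ℝ => x ^ ξ) := by
    filter_upwards [Filter.eventually_gt_atTop 0] with x hx
    rw [← Real.rpow_add hx]
    ring_nf
  have h5 := ((h3.trans_eventuallyEq h4).const_mul_left 4).add (hconst 6 ξ hξ)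
  filter_upwards [h5.bound one_pos, Filter.eventually_gt_atTop 0] with x hx hx0
  rw [one_mul, Real.norm_of_nonneg (Real.rpow_nonneg hx0.le ξ)] at hx
  exact (le_abs_self _).trans hx

theorem stmt1 {k s' : ℕ} (c : Sym2 (Fin k) → Fin s') (hc : UsesAllColours c)
    (s : ℕ) (hs : s' < s) :
    ∀ ξ : ℝ, 0 < ξ → ∃ N : ℕ, ∀ n : ℕ, N ≤ n →
      (hMin n (s + 1) c : ℝ) ≤ (hMin n s c : ℝ) ^ (1 + ξ) := by
  intro ξ hξ
  set a := Real.log (dropFactor k 1) with ha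
  have ha0 : 0 ≤ a := Real.log_natCast_nonneg _
  set F : ℝ → ℝ := fun x => (2 * s * Real.log x + 1) * (a + (k + 1) * Real.log x) with hF
  obtain ⟨T, hT⟩ := Filter.eventually_atTop.1 (eventually_log_sq_le (2 * s) a (k + 1) ξ hξ)
  -- For `n` this large, `homNum` is at least `T`, because `F` is monotone and bounds `log n`.
  obtain ⟨N, hN⟩ := Filter.eventually_atTop.1
    ((Real.tendsto_log_atTop.comp tendsto_natCast_atTop_atTop).eventually_gt_atTop
      (F (max T 1)))
  refine ⟨max N 1, fun n hn => ?_⟩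
  have hn1 : 1 ≤ n := (le_max_right _ _).trans hn
  rcases hMin_succ_le c hs hn1 with h0 | ⟨⟨χ, hχ, hm⟩, hle⟩
  · rw [h0]
    simpa using Real.rpow_nonneg (Nat.cast_nonneg _) _
  · set h := hMin n s c with hh
    have hlog := log_le c hs χ hχ hn1
    have hpos := homNum_pos χ hn1 (by omega)
    rw [hm] at hlog hpos
    have hposR : (1 : ℝ) ≤ h := by exact_mod_cast hpos
    have hNn : F (max T 1) < Real.log n := hN n ((le_max_left _ _).trans hn)
    have hTh : T ≤ h := by
      by_contra! hlt
      have hl0 : 0 ≤ Real.log h := Real.log_nonneg hposR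
      have hl1 : Real.log h ≤ Real.log (max T 1) :=
        Real.log_le_log (by linarith) (hlt.le.trans (le_max_left _ _))
      have : F h ≤ F (max T 1) := by
        simp only [hF]
        have hl2 : 0 ≤ Real.log (max T 1) := hl0.trans hl1
        have hl3 : 0 ≤ 2 * s * Real.log (max T 1) + 1 := by positivity
        gcongr
      exact absurd (hNn.trans_le (hlog.trans this)) (lt_irrefl _)
    have hb := hT h hTh
    have hn0 : (0 : ℝ) ≤ Real.log n := Real.log_natCast_nonneg _
    have hlog2 : (Nat.log 2 n : ℝ) ≤ 2 * Real.log n := by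
      have h1 : ((2 : ℝ)) ^ (Nat.log 2 n) ≤ n := by
        exact_mod_cast Nat.pow_log_le_self 2 (by omega)
      have h2 := Real.log_le_log (by positivity) h1
      rw [Real.log_pow] at h2
      have h6 := Real.log_two_gt_d9
      have : (0 : ℝ) ≤ Nat.log 2 n := Nat.cast_nonneg _
      nlinarith
    have hfac : (2 * Nat.log 2 n + 6 : ℝ) ≤ (h : ℝ) ^ ξ := by linarith
    calc (hMin n (s + 1) c : ℝ) ≤ h * (2 * Nat.log 2 n + 6) := by exact_mod_cast hle
      _ ≤ h * (h : ℝ) ^ ξ := mul_le_mul_of_nonneg_left hfac (by linarith)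
      _ = (h : ℝ) ^ (1 + ξ) := by
        rw [Real.rpow_add (by linarith), Real.rpow_one]
end

section
/- For every integer s ≥ 2, every edge-colouring c' of a clique K_k (k ≥ 3) using colours from {1,…,s}, and every real y > 0, there exists N such that for all n ≥ N: every c'-free s-edge-colouring c of K_n satisfies h_s(c) ≥ (log n)^y. -/
/-- The set `X` is free of the colour `i`: no pair of distinct elements of `X` has colour `i`. -/
def ColourFree {α C : Type*} (c : Sym2 α → C) (i : C) (X : Finset α) : Prop :=
  ∀ x ∈ X, ∀ y ∈ X, x ≠ y → c s(x, y) ≠ i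

/-! ### Greedy embedding -/

/-- Greedy embedding of a pattern `p` on `Fin k`, the vertex `j` being sought in the candidate set
`V j`. Each embedded vertex costs a factor `T` in the lower bound for the sizes of the later
candidate sets; if every choice of it violates this bound for some later candidate set,
pigeonholing over the index of that set yields the sparse pair `A, B`. -/
lemma exists_embedding_or_sparse {α C : Type*} [DecidableEq α] [DecidableEq C] (c : Sym2 α → C)
    (W : Finset α) (T L : ℕ) (hL : 0 < L) (k : ℕ) (hk : k ≤ T) (hT : 0 < T)
    (p : Fin k → Fin k → C) (V : Fin k → Finset α) (hVW : ∀ j, V j ⊆ W)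
    (hV : ∀ j, L * T ^ k ≤ (V j).card) :
    (∃ φ : Fin k → α, (∀ j, φ j ∈ V j) ∧ ∀ i j, i < j → φ j ≠ φ i ∧ c s(φ i, φ j) = p i j) ∨
    ∃ i : C, ∃ A B : Finset α, A ⊆ W ∧ B ⊆ W ∧ L ≤ A.card ∧ L ≤ B.card ∧
      ∀ v ∈ A, (B.filter fun u => u ≠ v ∧ c s(v, u) = i).card * T ≤ B.card := by
  induction k with
  | zero => exact Or.inl ⟨Fin.elim0, fun j => j.elim0, fun i => i.elim0⟩
  | succ m ih =>
    let N : α → Fin m → Finset α := fun v j =>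
      (V j.succ).filter fun u => u ≠ v ∧ c s(v, u) = p 0 j.succ
    by_cases h : ∃ v ∈ V 0, ∀ j, L * T ^ m ≤ (N v j).card
    · obtain ⟨v, hv, hN⟩ := h
      rcases ih (by omega) (fun i j => p i.succ j.succ) (N v)
        (fun j => (Finset.filter_subset _ _).trans (hVW _)) hN with ⟨φ, hφ, hφ'⟩ | h
      · left
        refine ⟨Fin.cons v φ, ?_, ?_⟩
        · intro j
          refine Fin.cases ?_ (fun j => ?_) j
          · simpa using hv
          · simpa using (Finset.mem_filter.1 (hφ j)).1
        · intro i j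
          refine Fin.cases ?_ (fun j => ?_) j
          · intro h
            exact absurd h (Fin.not_lt_zero _)
          · refine Fin.cases ?_ (fun i => ?_) i
            · intro _
              simpa using (Finset.mem_filter.1 (hφ j)).2
            · intro hij
              simpa using hφ' i j (Fin.succ_lt_succ_iff.1 hij)
      · exact Or.inr h
    · push Not at h
      right
      have hsub : V 0 ⊆ Finset.univ.biUnion fun j : Fin m =>
          (V 0).filter fun v => (N v j).card < L * T ^ m := by
        intro v hv
        obtain ⟨j, hj⟩ := h v hv
        simp only [Finset.mem_biUnion, Finset.mem_filter, Finset.mem_univ, true_and]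
        exact ⟨j, hv, hj⟩
      have hpig : ∃ j : Fin m, L ≤ ((V 0).filter fun v => (N v j).card < L * T ^ m).card := by
        by_contra! hcon
        have h1 : (V 0).card ≤ m * L := by
          refine (Finset.card_le_card hsub).trans (Finset.card_biUnion_le.trans ?_)
          refine (Finset.sum_le_card_nsmul _ _ L fun j _ => (hcon j).le).trans ?_
          simp
        have h2 : T ≤ T ^ (m + 1) := Nat.le_self_pow (by omega) T
        have h3 := hV 0
        have h4 : (m + 1) * L ≤ L * T ^ (m + 1) := by
          rw [mul_comm]
          exact Nat.mul_le_mul_left _ (hk.trans h2)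
        nlinarith
      obtain ⟨j, hj⟩ := hpig
      refine ⟨p 0 j.succ, _, V j.succ, (Finset.filter_subset _ _).trans (hVW 0), hVW _, hj,
        le_trans (Nat.le_mul_of_pos_right _ (by positivity)) (hV _), ?_⟩
      intro v hv
      have h1 := (Finset.mem_filter.1 hv).2
      have h2 := hV j.succ
      calc (N v j).card * T ≤ (L * T ^ m) * T := Nat.mul_le_mul_right _ h1.le
        _ = L * T ^ (m + 1) := by ring
        _ ≤ _ := h2

/-! ### The product potential -/

/-- The potential `∏ j, (S j).card` is superadditive under taking the disjoint union in the
colour `i` and the larger set in every other colour. -/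
lemma exists_combine {α : Type*} [DecidableEq α] {s : ℕ} (c : Sym2 α → Fin s) (i : Fin s)
    (W : Finset α) (S S' : Fin s → Finset α) (hS : ∀ j, S j ⊆ W ∧ ColourFree c j (S j))
    (hS' : ∀ j, S' j ⊆ W ∧ ColourFree c j (S' j))
    (hcross : ∀ v ∈ S i, ∀ u ∈ S' i, u ≠ v ∧ c s(v, u) ≠ i) :
    ∃ R : Fin s → Finset α, (∀ j, R j ⊆ W ∧ ColourFree c j (R j)) ∧
      ∏ j, (S j).card + ∏ j, (S' j).card ≤ ∏ j, (R j).card := by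
  let R : Fin s → Finset α := fun j =>
    if j = i then S i ∪ S' i else if (S j).card ≤ (S' j).card then S' j else S j
  have hRi : R i = S i ∪ S' i := by simp [R]
  have hR1 : ∀ j, (S j).card ≤ (R j).card := by
    intro j
    by_cases hj : j = i
    · subst hj
      rw [hRi]
      exact Finset.card_le_card Finset.subset_union_left
    · simp only [R, if_neg hj]
      split_ifs with h <;> omega
  have hR2 : ∀ j, (S' j).card ≤ (R j).card := by
    intro j
    by_cases hj : j = i
    · subst hj
      rw [hRi]
      exact Finset.card_le_card Finset.subset_union_right
    · simp only [R, if_neg hj]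
      split_ifs with h <;> omega
  refine ⟨R, ?_, ?_⟩
  · intro j
    by_cases hj : j = i
    · subst hj
      rw [hRi]
      refine ⟨Finset.union_subset (hS j).1 (hS' j).1, ?_⟩
      intro x hx y hy hxy
      rcases Finset.mem_union.1 hx with hx | hx <;> rcases Finset.mem_union.1 hy with hy | hy
      · exact (hS j).2 x hx y hy hxy
      · exact (hcross x hx y hy).2
      · rw [Sym2.eq_swap]
        exact (hcross y hy x hx).2
      · exact (hS' j).2 x hx y hy hxy
    · simp only [R, if_neg hj]
      split_ifs
      · exact hS' j
      · exact hS j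
  · have hdisj : Disjoint (S i) (S' i) := by
      rw [Finset.disjoint_left]
      intro v hv hv'
      exact (hcross v hv v hv').1 rfl
    rw [← Finset.mul_prod_erase _ (fun j => (S j).card) (Finset.mem_univ i),
      ← Finset.mul_prod_erase _ (fun j => (S' j).card) (Finset.mem_univ i),
      ← Finset.mul_prod_erase _ (fun j => (R j).card) (Finset.mem_univ i), hRi,
      Finset.card_union_of_disjoint hdisj, add_mul]
    exact Nat.add_le_add
      (Nat.mul_le_mul_left _ (Finset.prod_le_prod' fun j _ => hR1 j))
      (Nat.mul_le_mul_left _ (Finset.prod_le_prod' fun j _ => hR2 j))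

/-- If the vertices of `S` have few `i`-coloured neighbours in `B` and `S` is small, then at least
half of the vertices of `B` lie outside `S` and send no colour `i` to `S`. -/
lemma exists_half_avoiding {α C : Type*} [DecidableEq α] [DecidableEq C] (c : Sym2 α → C) (i : C)
    (S B : Finset α) (M T : ℕ) (hSM : S.card ≤ M) (hT : 4 * M ≤ T) (hB : 4 * M ≤ B.card)
    (hM : 0 < M)
    (h : ∀ v ∈ S, (B.filter fun u => u ≠ v ∧ c s(v, u) = i).card * T ≤ B.card) :
    ∃ G ⊆ B, (∀ u ∈ G, ∀ v ∈ S, u ≠ v ∧ c s(v, u) ≠ i) ∧ B.card ≤ 2 * G.card := by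
  set G := B.filter fun u => ∀ v ∈ S, u ≠ v ∧ c s(v, u) ≠ i with hG
  refine ⟨G, Finset.filter_subset _ _, fun u hu => (Finset.mem_filter.1 hu).2, ?_⟩
  set D : Finset α := S.biUnion fun v => B.filter fun u => u ≠ v ∧ c s(v, u) = i with hD
  have hcov : B ⊆ G ∪ (S ∪ D) := by
    intro u hu
    by_cases hmem : u ∈ S
    · simp [hmem]
    by_cases hu' : ∀ v ∈ S, u ≠ v ∧ c s(v, u) ≠ i
    · exact Finset.mem_union_left _ (Finset.mem_filter.2 ⟨hu, hu'⟩)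
    · push Not at hu'
      obtain ⟨v, hv, hvu⟩ := hu'
      have hne : u ≠ v := fun e => hmem (e ▸ hv)
      refine Finset.mem_union_right _ (Finset.mem_union_right _ ?_)
      exact Finset.mem_biUnion.2 ⟨v, hv, Finset.mem_filter.2 ⟨hu, hne, hvu hne⟩⟩
  have h1 : B.card ≤ G.card + (S.card + D.card) :=
    (Finset.card_le_card hcov).trans ((Finset.card_union_le _ _).trans
      (Nat.add_le_add_left (Finset.card_union_le _ _) _))
  have h2 : D.card * T ≤ M * B.card := by
    calc D.card * T
        ≤ (∑ v ∈ S, (B.filter fun u => u ≠ v ∧ c s(v, u) = i).card) * T :=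
          Nat.mul_le_mul_right _ Finset.card_biUnion_le
      _ = ∑ v ∈ S, (B.filter fun u => u ≠ v ∧ c s(v, u) = i).card * T := Finset.sum_mul _ _ _
      _ ≤ S.card * B.card := Finset.sum_le_card_nsmul _ _ _ h
      _ ≤ M * B.card := Nat.mul_le_mul_right _ hSM
  have h3 : 4 * D.card ≤ B.card := by
    have : M * (4 * D.card) ≤ M * B.card := by
      refine le_trans ?_ h2
      calc M * (4 * D.card) = D.card * (4 * M) := by ring
        _ ≤ D.card * T := Nat.mul_le_mul_left _ hT
    exact Nat.le_of_mul_le_mul_left this hM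
  omega

/-- The product of the largest sizes of `j`-free subsets doubles each time the size of the
ambient set is multiplied by `4 * M * T ^ k`. -/
lemma exists_free_family {n s k : ℕ} (c : Sym2 (Fin n) → Fin s) (c' : Sym2 (Fin k) → Fin s)
    (hc : ¬ HasCopy c c') (M T : ℕ) (hM : 0 < M) (hT : 4 * M ≤ T) (hkT : k ≤ T)
    (hfree : ∀ i X, ColourFree c i X → X.card ≤ M) (t : ℕ) (W : Finset (Fin n))
    (hW : (4 * M * T ^ k) ^ t ≤ W.card) :
    ∃ S : Fin s → Finset (Fin n), (∀ j, S j ⊆ W ∧ ColourFree c j (S j)) ∧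
      2 ^ t ≤ ∏ j, (S j).card := by
  induction t generalizing W with
  | zero =>
    obtain ⟨w, hw⟩ := Finset.card_pos.1 (by simpa using hW : 0 < W.card)
    refine ⟨fun _ => {w}, fun j => ⟨by simpa using hw, ?_⟩, by simp⟩
    intro x hx y hy hxy
    exact absurd ((Finset.mem_singleton.1 hx).trans (Finset.mem_singleton.1 hy).symm) hxy
  | succ t ih =>
    set K := 4 * M * T ^ k with hK
    have hT0 : 0 < T := by omega
    have hK0 : 0 < K := by positivity
    have hKt : 0 < K ^ t := by positivity
    rcases exists_embedding_or_sparse c W T (4 * M * K ^ t) (by positivity) k hkT hT0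
      (fun i j => c' s(i, j)) (fun _ => W) (fun _ => subset_rfl)
      (fun _ => le_trans (le_of_eq (by rw [pow_succ]; nth_rw 3 [hK]; ring)) hW) with
      ⟨φ, -, hφ⟩ | ⟨i, A, B, hAW, hBW, hA, hB, hAB⟩
    · exfalso
      apply hc
      have hinj : Function.Injective φ := by
        intro a b hab
        rcases lt_trichotomy a b with h | h | h
        · exact absurd hab.symm (hφ a b h).1
        · exact h
        · exact absurd hab (hφ b a h).1
      refine ⟨⟨φ, hinj⟩, fun a b hab => ?_⟩
      rcases lt_or_gt_of_ne hab with h | h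
      · exact congrArg Fin.val (hφ a b h).2
      · rw [Sym2.eq_swap, Sym2.eq_swap (a := a)]
        exact congrArg Fin.val (hφ b a h).2
    · obtain ⟨S, hS, hSp⟩ := ih A (by nlinarith)
      obtain ⟨G, hGB, hG, hhalf⟩ := exists_half_avoiding c i (S i) B M T (hfree i _ (hS i).2) hT
        (by nlinarith) hM (fun v hv => hAB v ((hS i).1 hv))
      obtain ⟨S', hS', hSp'⟩ := ih G (by nlinarith)
      obtain ⟨R, hR, hRp⟩ := exists_combine c i W S S'
        (fun j => ⟨(hS j).1.trans hAW, (hS j).2⟩)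
        (fun j => ⟨(hS' j).1.trans (hGB.trans hBW), (hS' j).2⟩)
        (fun v hv u hu => hG u ((hS' i).1 hu) v hv)
      exact ⟨R, hR, by rw [pow_succ]; omega⟩

/-- If all homogeneous sets have at most `M` elements, then `n < K ^ t` for `K = poly(M)` and
`t = O(log M)`. -/
lemma lt_of_free_card_le {n s k : ℕ} (hs : 0 < s) (c : Sym2 (Fin n) → Fin s)
    (c' : Sym2 (Fin k) → Fin s) (hc : ¬ HasCopy c c') (M : ℕ) (hM : 0 < M)
    (hfree : ∀ i X, ColourFree c i X → X.card ≤ M) :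
    n < (4 * M * (4 * M + k) ^ k) ^ (s * (Nat.log 2 M + 1)) := by
  by_contra! hn
  obtain ⟨S, hS, hSp⟩ := exists_free_family c c' hc M (4 * M + k) hM (by omega) (by omega) hfree
    (s * (Nat.log 2 M + 1)) Finset.univ (by simpa using hn)
  have h1 : ∏ j, (S j).card ≤ M ^ s := by
    calc ∏ j, (S j).card ≤ ∏ _j : Fin s, M := Finset.prod_le_prod' fun j _ => hfree j _ (hS j).2
      _ = M ^ s := by simp
  have h2 : M ^ s < 2 ^ (s * (Nat.log 2 M + 1)) := by
    rw [mul_comm, pow_mul]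
    exact Nat.pow_lt_pow_left (Nat.lt_pow_succ_log_self (by norm_num) M) (by omega)
  omega

/-! ### Asymptotics -/

/-- A product of two affine functions of `log u` is eventually dominated by `a * u`. -/
lemma eventually_affine_log_mul_le (a b₁ d₁ b₂ d₂ : ℝ) (ha : 0 < a) :
    ∀ᶠ u : ℝ in Filter.atTop, (b₁ * Real.log u + d₁) * (b₂ * Real.log u + d₂) ≤ a * u := by
  have key : ∀ b d : ℝ, (fun u : ℝ => b * Real.log u + d) =o[Filter.atTop]
      fun u : ℝ => u ^ (1 / 2 : ℝ) := by
    intro b d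
    refine ((isLittleO_log_rpow_atTop (by norm_num)).const_mul_left b).add ?_
    rw [Asymptotics.isLittleO_const_left]
    right
    exact tendsto_norm_atTop_atTop.comp (tendsto_rpow_atTop (by norm_num))
  filter_upwards [((key b₁ d₁).mul (key b₂ d₂)).bound ha, Filter.eventually_gt_atTop 0]
    with u hu hu0
  rw [← Real.rpow_add hu0] at hu
  norm_num at hu
  rw [abs_of_pos hu0] at hu
  refine le_trans (le_abs_self _) ?_
  rwa [abs_mul]

/-- With `M = ⌊(log₂ n) ^ y⌋`, the bound of `lt_of_free_card_le` fails for large `n`. -/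
lemma eventually_pow_le (s k : ℕ) (y : ℝ) (hy : 0 < y) :
    ∀ᶠ n : ℕ in Filter.atTop, 0 < ⌊(Real.logb 2 n) ^ y⌋₊ ∧
      (4 * ⌊(Real.logb 2 n) ^ y⌋₊ * (4 * ⌊(Real.logb 2 n) ^ y⌋₊ + k) ^ k) ^
        (s * (Nat.log 2 ⌊(Real.logb 2 n) ^ y⌋₊ + 1)) ≤ n := by
  have hlog2 : 0 < Real.log 2 := Real.log_pos (by norm_num)
  have htend : Filter.Tendsto (fun n : ℕ => Real.logb 2 n) Filter.atTop Filter.atTop :=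
    (Real.tendsto_logb_atTop (by norm_num)).comp tendsto_natCast_atTop_atTop
  filter_upwards [htend.eventually (eventually_affine_log_mul_le (Real.log 2)
      (s * (y / Real.log 2)) s ((k + 1) * y) ((k + 1) * Real.log (4 + k)) hlog2),
    htend.eventually (Filter.eventually_ge_atTop 1), Filter.eventually_gt_atTop 0]
    with n hn hu hn0
  set u := Real.logb 2 n with hudef
  set M := ⌊u ^ y⌋₊ with hMdef
  have hu0 : 0 < u := by linarith
  have huy : 1 ≤ u ^ y := Real.one_le_rpow hu hy.le
  have hM : 0 < M := Nat.floor_pos.2 huy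
  have hM1 : (1 : ℝ) ≤ M := by exact_mod_cast hM
  have hMle : (M : ℝ) ≤ u ^ y := Nat.floor_le (by linarith)
  refine ⟨hM, ?_⟩
  have hlogM : Real.log M ≤ y * Real.log u := by
    rw [← Real.log_rpow hu0]
    exact Real.log_le_log (by linarith) hMle
  have hlogM0 : 0 ≤ Real.log M := Real.log_nonneg hM1
  have ht : ((s * (Nat.log 2 M + 1) : ℕ) : ℝ) ≤ s * (y / Real.log 2) * Real.log u + s := by
    have h1 : (Nat.log 2 M : ℝ) ≤ Real.logb 2 M := by exact_mod_cast Real.natLog_le_logb M 2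
    have h2 : Real.logb 2 M ≤ y / Real.log 2 * Real.log u := by
      rw [Real.logb, div_mul_eq_mul_div]
      exact div_le_div_of_nonneg_right hlogM hlog2.le
    push_cast
    have hs0 : (0 : ℝ) ≤ s := Nat.cast_nonneg s
    nlinarith
  set t := s * (Nat.log 2 M + 1) with htdef
  have hk0 : (0 : ℝ) ≤ k := Nat.cast_nonneg k
  have hK : Real.log ((4 * M * (4 * M + k) ^ k : ℕ) : ℝ) ≤
      (k + 1) * y * Real.log u + (k + 1) * Real.log (4 + k) := by
    have h1 : ((4 * M * (4 * M + k) ^ k : ℕ) : ℝ) ≤ ((4 + k) * M) ^ (k + 1) := by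
      push_cast
      rw [pow_succ']
      have : (4 * M + k : ℝ) ≤ (4 + k) * M := by nlinarith
      gcongr
      linarith
    have h2 := Real.log_le_log (by positivity) h1
    rw [Real.log_pow, Real.log_mul (by positivity) (by positivity)] at h2
    push_cast at h2 ⊢
    nlinarith
  have hK0 : 0 ≤ Real.log ((4 * M * (4 * M + k) ^ k : ℕ) : ℝ) := Real.log_natCast_nonneg _
  have hfin : Real.log (((4 * M * (4 * M + k) ^ k) ^ t : ℕ) : ℝ) ≤ Real.log n := by
    have h3 : Real.log 2 * u = Real.log n := by
      rw [hudef, Real.logb]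
      field_simp
    rw [Nat.cast_pow, Real.log_pow, ← h3]
    refine le_trans (mul_le_mul ht hK hK0 (le_trans (Nat.cast_nonneg _) ht)) hn
  have hpos : (0 : ℝ) < (((4 * M * (4 * M + k) ^ k) ^ t : ℕ) : ℝ) := by
    have : 0 < (4 * M * (4 * M + k) ^ k) ^ t := by positivity
    exact_mod_cast this
  exact_mod_cast (Real.log_le_log_iff hpos (by exact_mod_cast hn0)).1 hfin

theorem stmt4 (s : ℕ) (hs : 2 ≤ s) (k : ℕ) (hk : 3 ≤ k)
    (c' : Sym2 (Fin k) → Fin s)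
    (hc' : ∃ x y z w : Fin k, x ≠ y ∧ z ≠ w ∧ c' s(x, y) ≠ c' s(z, w))
    (y : ℝ) (hy : 0 < y) :
    ∃ N : ℕ, ∀ n : ℕ, N ≤ n → ∀ c : Sym2 (Fin n) → Fin s, ¬ HasCopy c c' →
      ∃ X : Finset (Fin n), IsHomog c X ∧ (Real.logb 2 n) ^ y ≤ (X.card : ℝ) := by
  obtain ⟨N, hN⟩ := Filter.eventually_atTop.1 (eventually_pow_le s k y hy)
  refine ⟨N, fun n hn c hc => ?_⟩
  obtain ⟨hM, hle⟩ := hN n hn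
  by_contra! hcon
  exact absurd hle (not_le.2 (lt_of_free_card_le (by omega) c c' hc _ hM
    fun i X hX => Nat.le_floor (hcon X ⟨i, hX⟩).le))
end

section
/- Let c be the 2-edge-colouring of K_4 on vertex set {1,2,3,4} with colour 1 on the pairs {1,2}, {2,3}, {3,4} and colour 2 on the pairs {1,3}, {2,4}, {1,4} (each colour class is a path on 4 vertices). There is a constant C > 0 such that for all sufficiently large n there exists a 3-edge-colouring of K_n with colours {1,2,3} that is c-free (contains no four vertices whose induced colouring is a copy of c) and in which every set of vertices missing at least one of the three colours has size at most C·n^{1/3}·(log n)^{7/3}. In particular, h_3(n, c) = O(n^{1/3} (log n)^{7/3}). -/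
/-- The 2-edge-colouring of `K_4` in which colour `0` forms the path
`0-1-2-3` and colour `1` forms the complementary path `1-3-0-2`. -/
def cP4 : Sym2 (Fin 4) → Fin 2 := fun e =>
  if e = s((0 : Fin 4), (1 : Fin 4)) ∨ e = s((1 : Fin 4), (2 : Fin 4)) ∨
     e = s((2 : Fin 4), (3 : Fin 4)) then 0 else 1

section ColouringConstruction

open Finset

/-! ### Secants of the Hermitian curve -/

/-- The algebraic core of the absence of O'Nan configurations: three points `A`, `B`, `C` of the curve
`y + σ y = x * σ x` that are not collinear, and a line `y = m * x + b` through none of them, cannot be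
such that the line meets each of `AB`, `BC`, `CA` in a point of the curve. Those three points are
written as `(1 - u) A + u B`, `(1 - v) B + v C` and `(1 - w) C + w A`. -/
theorem onan_aux {K : Type*} [Field K] (σ : K →+* K)
    {xA yA xB yB xC yC m b u v w m1 b1 m2 b2 : K}
    (hA : yA + σ yA = xA * σ xA) (hB : yB + σ yB = xB * σ xB) (hC : yC + σ yC = xC * σ xC)
    (hAB : xA ≠ xB) (hAC : xA ≠ xC) (hm : m1 ≠ m2)
    (hA1 : yA = m1 * xA + b1) (hC1 : yC = m1 * xC + b1)
    (hA2 : yA = m2 * xA + b2) (hB2 : yB = m2 * xB + b2)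
    (hA4 : yA ≠ m * xA + b) (hB4 : yB ≠ m * xB + b) (hC4 : yC ≠ m * xC + b)
    (hu : u ≠ 0) (hv : v ≠ 0) (hw : w ≠ 0)
    (hP : ((1-u) * yA + u * yB) = m * ((1-u) * xA + u * xB) + b)
    (hQ : ((1-v) * yB + v * yC) = m * ((1-v) * xB + v * xC) + b)
    (hR : ((1-w) * yC + w * yA) = m * ((1-w) * xC + w * xA) + b)
    (hP' : ((1-u) * yA + u * yB) + σ ((1-u) * yA + u * yB) =
      ((1-u) * xA + u * xB) * σ ((1-u) * xA + u * xB))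
    (hQ' : ((1-v) * yB + v * yC) + σ ((1-v) * yB + v * yC) =
      ((1-v) * xB + v * xC) * σ ((1-v) * xB + v * xC))
    (hR' : ((1-w) * yC + w * yA) + σ ((1-w) * yC + w * yA) =
      ((1-w) * xC + w * xA) * σ ((1-w) * xC + w * xA)) : False := by
  -- Menelaus' theorem for the line `y = m * x + b` and the triangle `A B C`
  have men : (1-u) * (1-v) * (1-w) = - (u * v * w) := by
    have h1 : (1-u) * (yA - m * xA - b) = - u * (yB - m * xB - b) := by linear_combination hP
    have h2 : (1-v) * (yB - m * xB - b) = - v * (yC - m * xC - b) := by linear_combination hQ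
    have h3 : (1-w) * (yC - m * xC - b) = - w * (yA - m * xA - b) := by linear_combination hR
    have a1 : yA - m * xA - b ≠ 0 := fun h => hA4 (by linear_combination h)
    have a2 : yB - m * xB - b ≠ 0 := fun h => hB4 (by linear_combination h)
    have a3 : yC - m * xC - b ≠ 0 := fun h => hC4 (by linear_combination h)
    generalize yA - m * xA - b = f at *
    generalize yB - m * xB - b = g at *
    generalize yC - m * xC - b = k at *
    have : (f * g * k) * ((1-u) * (1-v) * (1-w)) = (f * g * k) * (-(u * v * w)) := by
      have e : ((1-u) * f) * ((1-v) * g) * ((1-w) * k) = (-u * g) * (-v * k) * (-w * f) := by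
        rw [h1, h2, h3]
      linear_combination e
    exact mul_left_cancel₀ (by simp [a1, a2, a3]) this
  simp only [map_add, map_mul, map_sub, map_one] at hP' hQ' hR'
  have men' : (1 - σ u) * (1 - σ v) * (1 - σ w) = - (σ u * σ v * σ w) := by
    simpa using congrArg σ men
  have su : σ u ≠ 0 := by simpa using hu
  have sv : σ v ≠ 0 := by simpa using hv
  have sw : σ w ≠ 0 := by simpa using hw
  have eA : σ yA = xA * σ xA - yA := by linear_combination hA
  have eB : σ yB = xB * σ xB - yB := by linear_combination hB
  have eC : σ yC = xC * σ xC - yC := by linear_combination hC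
  -- For the Hermitian form attached to the curve, the Gram matrix of the triangle has zero diagonal,
  -- so its determinant is a sum of two products; it is also `det * σ det` for the matrix of
  -- coordinates of the triangle.
  have gram : (yA + σ yB - xA * σ xB) * (yB + σ yC - xB * σ xC) * (yC + σ yA - xC * σ xA)
      + (yB + σ yA - xB * σ xA) * (yC + σ yB - xC * σ xB) * (yA + σ yC - xA * σ xC)
      = ((xB - xA) * (yC - yA) - (xC - xA) * (yB - yA)) *
        ((σ xB - σ xA) * (σ yC - σ yA) - (σ xC - σ xA) * (σ yB - σ yA)) := by
    rw [eA, eB, eC]; ring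
  have D0 : (xB - xA) * (yC - yA) - (xC - xA) * (yB - yA) ≠ 0 := by
    have : (xB - xA) * (yC - yA) - (xC - xA) * (yB - yA) = (xB - xA) * (xC - xA) * (m1 - m2) := by
      have h1 : yC - yA = m1 * (xC - xA) := by linear_combination hC1 - hA1
      have h2 : yB - yA = m2 * (xB - xA) := by linear_combination hB2 - hA2
      rw [h1, h2]; ring
    rw [this]
    simp [sub_eq_zero, hAB.symm, hAC.symm, hm]
  have D0' : (σ xB - σ xA) * (σ yC - σ yA) - (σ xC - σ xA) * (σ yB - σ yA) ≠ 0 := by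
    simpa using (map_ne_zero σ).2 D0
  -- each of the three further points is isotropic for the same form
  have i1 : (1-u) * σ u * (yA + σ yB - xA * σ xB) = - (u * (1 - σ u) * (yB + σ yA - xB * σ xA)) := by
    linear_combination hP' - (1-u)*(1-σ u) * hA - u * σ u * hB
  have i2 : (1-v) * σ v * (yB + σ yC - xB * σ xC) = - (v * (1 - σ v) * (yC + σ yB - xC * σ xB)) := by
    linear_combination hQ' - (1-v)*(1-σ v) * hB - v * σ v * hC
  have i3 : (1-w) * σ w * (yC + σ yA - xC * σ xA) = - (w * (1 - σ w) * (yA + σ yC - xA * σ xC)) := by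
    linear_combination hR' - (1-w)*(1-σ w) * hC - w * σ w * hA
  generalize yA + σ yB - xA * σ xB = α at *
  generalize yB + σ yC - xB * σ xC = β at *
  generalize yC + σ yA - xC * σ xA = γ at *
  generalize yB + σ yA - xB * σ xA = α' at *
  generalize yC + σ yB - xC * σ xB = β' at *
  generalize yA + σ yC - xA * σ xC = γ' at *
  have key : (u * v * w * (σ u * σ v * σ w)) * (α * β * γ + α' * β' * γ') = 0 := by
    have e : ((1-u) * σ u * α) * ((1-v) * σ v * β) * ((1-w) * σ w * γ)
      = (- (u * (1 - σ u) * α')) * (- (v * (1 - σ v) * β')) * (- (w * (1 - σ w) * γ')) := by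
      rw [i1, i2, i3]
    linear_combination (-1) * e + (σ u * σ v * σ w * α * β * γ) * men
      + (u * v * w * α' * β' * γ') * men'
  rw [gram] at key
  simp_all

section
variable {K : Type*} [Field K] [Fintype K] [DecidableEq K]

/-- The fibres of the trace `y ↦ y + y ^ q` have at most `q` elements. -/
theorem card_trace_le (q : ℕ) (hq : 2 ≤ q) (c : K) :
    (univ.filter fun y : K => y + y ^ q = c).card ≤ q := by
  classical
  let f : Polynomial K := Polynomial.X ^ q + (Polynomial.X - Polynomial.C c)
  have hd : f.natDegree = q := by
    apply Polynomial.natDegree_add_eq_left_of_natDegree_lt _ |>.trans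
    · simp
    · simp; omega
  have hf : f ≠ 0 := by
    intro h; rw [h] at hd; simp at hd; omega
  calc _ ≤ f.roots.toFinset.card := by
        apply card_le_card
        intro y hy
        simp only [mem_filter, mem_univ, true_and] at hy
        simp only [Multiset.mem_toFinset, Polynomial.mem_roots hf, Polynomial.IsRoot, f]
        simp [← hy]
    _ ≤ f.roots.card := Multiset.toFinset_card_le _
    _ ≤ q := hd ▸ Polynomial.card_roots' f

/-- A nonzero element of the subfield of order `q` is the norm of at least `q` elements: no fibre of
the norm has more than `q + 1` elements, and these fibres partition the `q ^ 2 - 1` units. -/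
theorem card_norm_ge (q : ℕ) (hq : 2 ≤ q) (hK : Fintype.card K = q ^ 2) (c : K)
    (hc : c ≠ 0) (hcq : c ^ q = c) :
    q ≤ (univ.filter fun u : K => u * u ^ q = c).card := by
  classical
  have fib : ∀ d : K, (univ.filter fun u : K => u * u ^ q = d).card ≤ q + 1 := by
    intro d
    calc _ ≤ (Polynomial.nthRoots (q+1) d).toFinset.card := by
          apply card_le_card
          intro u hu
          simp only [mem_filter, mem_univ, true_and] at hu
          simp only [Multiset.mem_toFinset]
          rw [Polynomial.mem_nthRoots (by omega), ← hu, pow_succ, mul_comm]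
      _ ≤ _ := Multiset.toFinset_card_le _
      _ ≤ q + 1 := Polynomial.card_nthRoots _ _
  set T := univ.filter fun d : K => d ≠ 0 ∧ d ^ q = d with hT
  have cT : T.card ≤ q - 1 := by
    calc _ ≤ (Polynomial.nthRoots (q-1) (1:K)).toFinset.card := by
          apply card_le_card
          intro u hu
          simp only [hT, mem_filter, mem_univ, true_and] at hu
          simp only [Multiset.mem_toFinset]
          rw [Polynomial.mem_nthRoots (by omega)]
          apply mul_right_cancel₀ hu.1
          rw [← pow_succ, one_mul, Nat.sub_add_cancel (by omega), hu.2]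
      _ ≤ _ := Multiset.toFinset_card_le _
      _ ≤ q - 1 := Polynomial.card_nthRoots _ _
  have hmaps : ∀ u ∈ (univ.filter fun u : K => u ≠ 0), u * u ^ q ∈ T := by
    intro u hu
    simp only [hT, mem_filter, mem_univ, true_and] at hu ⊢
    refine ⟨by simp [hu], ?_⟩
    rw [mul_pow, ← pow_mul, ← sq, ← hK, FiniteField.pow_card, mul_comm]
  have hsum := card_eq_sum_card_fiberwise (f := fun u : K => u * u ^ q) hmaps
  have hcard : (univ.filter fun u : K => u ≠ 0).card = q ^ 2 - 1 := by
    rw [filter_ne', card_erase_of_mem (mem_univ _), card_univ, hK]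
  have hcT : c ∈ T := by simp [hT, hc, hcq]
  rw [hcard, ← add_sum_erase _ _ hcT] at hsum
  have h1 : ∑ x ∈ T.erase c, ((univ.filter fun u : K => u ≠ 0).filter
      fun u => u * u ^ q = x).card ≤ (q - 2) * (q + 1) := by
    refine (sum_le_card_nsmul _ _ (q+1) fun d _ => ?_).trans ?_
    · exact (card_le_card (by intro u; simp +contextual)).trans (fib d)
    · rw [smul_eq_mul, card_erase_of_mem hcT]
      exact Nat.mul_le_mul_right _ (by omega)
  have h2 : ((univ.filter fun u : K => u ≠ 0).filter fun u => u * u ^ q = c).card ≤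
      (univ.filter fun u : K => u * u ^ q = c).card :=
    card_le_card (by intro u; simp +contextual)
  obtain ⟨r, rfl⟩ : ∃ r, q = r + 2 := ⟨q - 2, by omega⟩
  have : (r+2)^2 - 1 = r * (r+2+1) + (r + 3) := by
    have : (r+2)^2 = r * (r+2+1) + (r + 3) + 1 := by ring
    omega
  simp only [Nat.add_sub_cancel] at h1
  rw [this] at hsum
  omega
end

/-- A partial linear space with points `P` and lines `L`, where `B p` is the set of lines through `p`:
at most `q ^ 3` points, about `q ^ 4` lines, each with at least `q` points, two points on at most one
line. The field `onan` excludes O'Nan configurations: four lines `a`, `b`, `c`, `d`, no three of which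
are concurrent, cannot meet pairwise. Only `a ≠ b` is asked for, since the remaining lines are
automatically distinct. -/
structure IsONanFree {P L : Type} [Fintype P] [Fintype L] [DecidableEq L]
    (B : P → Finset L) (q : ℕ) : Prop where
  card_points : Fintype.card P ≤ q ^ 3
  card_lines_ge : q ^ 4 ≤ Fintype.card L + q ^ 3
  card_lines_le : Fintype.card L ≤ q ^ 4
  line_size : ∀ l, q ≤ (univ.filter fun p => l ∈ B p).card
  linear : ∀ l l' p p', l ≠ l' → l ∈ B p → l' ∈ B p → l ∈ B p' → l' ∈ B p' → p = p'
  onan : ∀ a b c d pab pac pad pbc pbd pcd, a ≠ b →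
    a ∈ B pab → b ∈ B pab → a ∈ B pac → c ∈ B pac → a ∈ B pad → d ∈ B pad →
    b ∈ B pbc → c ∈ B pbc → b ∈ B pbd → d ∈ B pbd → c ∈ B pcd → d ∈ B pcd →
    c ∉ B pab → d ∉ B pab → d ∉ B pac → d ∉ B pbc → False

/-- The points of the Hermitian curve `y + y ^ q = x * x ^ q` over the field of order `q ^ 2`, with its
non-vertical secants as lines. The line `y = m * x + b` is a tangent exactly when
`b + b ^ q = -(m * m ^ q)`. -/
theorem exists_onanFree (q : ℕ) [hq : Fact q.Prime] :
    ∃ (P L : Type) (_ : Fintype P) (_ : Fintype L) (_ : DecidableEq L) (B : P → Finset L),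
      IsONanFree B q := by
  classical
  have h2 : 2 ≤ q := hq.out.two_le
  let K := GaloisField q 2
  have : Fintype K := Fintype.ofFinite K
  have hK : Fintype.card K = q ^ 2 := by
    rw [← Nat.card_eq_fintype_card]; exact GaloisField.card q 2 (by norm_num)
  let σ : K →+* K := frobenius K q
  have hσ : ∀ x, σ x = x ^ q := fun x => rfl
  have hσσ : ∀ x, σ (σ x) = x := fun x => by
    rw [hσ, hσ, ← pow_mul, ← sq, ← hK, FiniteField.pow_card]
  let P := {z : K × K // z.2 + z.2 ^ q = z.1 * z.1 ^ q}
  let L := {z : K × K // z.2 + z.2 ^ q ≠ -(z.1 * z.1 ^ q)}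
  let B : P → Finset L := fun p => univ.filter fun l => p.1.2 = l.1.1 * p.1.1 + l.1.2
  have hB : ∀ (p : P) (l : L), l ∈ B p ↔ p.1.2 = l.1.1 * p.1.1 + l.1.2 := by
    intro p l; simp [B]
  have hlin : ∀ (l l' : L) (p p' : P), l ≠ l' → l ∈ B p → l' ∈ B p → l ∈ B p' → l' ∈ B p' →
      p = p' := by
    rintro ⟨⟨m, b⟩, hl⟩ ⟨⟨m', b'⟩, hl'⟩ ⟨⟨x, y⟩, hp⟩ ⟨⟨x', y'⟩, hp'⟩ hne h1 h2 h3 h4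
    simp only [hB] at h1 h2 h3 h4
    have hm : (m - m') * (x - x') = 0 := by linear_combination h2 - h1 + h3 - h4
    rcases mul_eq_zero.1 hm with h | h
    · have e : m = m' := sub_eq_zero.1 h
      subst e
      exact absurd (by congr 2; linear_combination h2 - h1) hne
    · have e : x = x' := sub_eq_zero.1 h
      subst e
      congr 2
      rw [h1, h3]
  have fibre : ∀ f : K → K, (univ.filter fun z : K × K => z.2 + z.2 ^ q = f z.1).card ≤ q ^ 3 := by
    intro f
    have hm : ∀ z ∈ (univ.filter fun z : K × K => z.2 + z.2 ^ q = f z.1), z.1 ∈ (univ : Finset K) :=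
      fun _ _ => mem_univ _
    rw [card_eq_sum_card_fiberwise hm]
    refine (sum_le_card_nsmul _ _ q fun x _ => ?_).trans ?_
    · refine (card_le_card_of_injOn Prod.snd ?_ ?_).trans (card_trace_le q h2 (f x))
      · rintro ⟨a, b⟩ h
        simp only [coe_filter, mem_filter, mem_univ, true_and, Set.mem_ofPred_eq] at h ⊢
        rw [h.1, h.2]
      · rintro ⟨a, b⟩ h ⟨a', b'⟩ h' e
        simp only [coe_filter, mem_filter, mem_univ, true_and, Set.mem_ofPred_eq] at h h' e
        rw [h.2, h'.2, e]
    · rw [card_univ, hK, smul_eq_mul]; exact le_of_eq (by ring)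
  refine ⟨P, L, inferInstance, inferInstance, inferInstance, B, ?_, ?_, ?_, ?_, hlin, ?_⟩
  · rw [Fintype.card_subtype]; exact fibre fun x => x * x ^ q
  · have := fibre fun x => -(x * x ^ q)
    have e := card_filter_add_card_filter_not (s := (univ : Finset (K × K)))
      (fun z => z.2 + z.2 ^ q = -(z.1 * z.1 ^ q))
    rw [card_univ, Fintype.card_prod, hK] at e
    rw [Fintype.card_subtype]
    have : q ^ 4 = q ^ 2 * q ^ 2 := by ring
    simp only [ne_eq]
    omega
  · refine (Fintype.card_subtype_le _).trans ?_
    rw [Fintype.card_prod, hK]; exact le_of_eq (by ring)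
  · rintro ⟨⟨m, b⟩, hl⟩
    have hl' : b + b ^ q + m * m ^ q ≠ 0 := fun h => hl (by linear_combination h)
    have hmm : (m ^ q) ^ q = m := hσσ m
    have hbb : (b ^ q) ^ q = b := hσσ b
    refine (card_norm_ge q h2 hK _ hl' ?_).trans ?_
    · change σ _ = _
      simp only [map_add, map_mul]
      simp only [hσ, hmm, hbb]; ring
      -- in the coordinate `u = x - m ^ q` the points on the line form a fibre of the norm
    · have key : ∀ u : K, u * u ^ q = b + b ^ q + m * m ^ q →
          (m * (u + m ^ q) + b) + (m * (u + m ^ q) + b) ^ q = (u + m ^ q) * (u + m ^ q) ^ q := by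
        intro u hu
        simp only [← hσ] at hu ⊢
        simp only [map_add, map_mul, hσσ]
        linear_combination -hu
      refine card_le_card_of_injOn (fun u => if hu : u * u ^ q = b + b ^ q + m * m ^ q then
        ⟨(u + m ^ q, m * (u + m ^ q) + b), key u hu⟩ else ⟨(0, 0), by simp [hq.out.ne_zero]⟩) ?_ ?_
      · intro u hu
        simp only [coe_filter, mem_univ, true_and, Set.mem_ofPred_eq] at hu
        simp [hu, hB]
      · intro u hu u' hu' e
        simp only [coe_filter, mem_univ, true_and, Set.mem_ofPred_eq] at hu hu'
        simp only [hu, hu', dite_true] at e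
        exact add_right_cancel (congrArg (fun p : P => p.1.1) e)
  · intro a b c d pA pC pR pB pP pQ hab aA bA aC cC aR dR bB cB bP dP cQ dQ cA dA dC dB
    have AB : pA ≠ pB := by rintro rfl; exact cA cB
    have AC : pA ≠ pC := by rintro rfl; exact cA cC
    have BC : pB ≠ pC := by
      rintro rfl; exact AB (hlin a b _ _ hab aA bA aC bB)
    have PA : pP ≠ pA := by rintro rfl; exact dA dP
    have QB : pQ ≠ pB := by rintro rfl; exact dB dQ
    have RC : pR ≠ pC := by rintro rfl; exact dC dR
    have xne : ∀ (l : L) (p p' : P), p ≠ p' → l ∈ B p → l ∈ B p' → p.1.1 ≠ p'.1.1 := by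
      intro l p p' hne h h' e
      rw [hB] at h h'
      exact hne (Subtype.ext (Prod.ext e (by rw [h, h', e])))
    have hm : a.1.1 ≠ b.1.1 := by
      intro e
      rw [hB] at aA bA
      refine hab (Subtype.ext (Prod.ext e ?_))
      rw [← e] at bA
      linear_combination bA - aA
    have xAB := xne b pA pB AB bA bB
    have xAC := xne a pA pC AC aA aC
    have xBC := xne c pB pC BC cB cC
    have xPA := xne b pP pA PA bP bA
    have xQB := xne c pQ pB QB cQ cB
    have xRC := xne a pR pC RC aR aC
    have par : ∀ (l : L) (p p' r : P), l ∈ B p → l ∈ B p' → l ∈ B r → p.1.1 ≠ p'.1.1 →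
        r.1.1 ≠ p.1.1 → ∃ u : K, u ≠ 0 ∧ (1 - u) * p.1.1 + u * p'.1.1 = r.1.1 ∧
          (1 - u) * p.1.2 + u * p'.1.2 = r.1.2 := by
      intro l p p' r hp hp' hr h1 h2
      rw [hB] at hp hp' hr
      have h1' : p'.1.1 - p.1.1 ≠ 0 := sub_ne_zero.2 h1.symm
      have hx : (1 - (r.1.1 - p.1.1) / (p'.1.1 - p.1.1)) * p.1.1 +
          ((r.1.1 - p.1.1) / (p'.1.1 - p.1.1)) * p'.1.1 = r.1.1 := by
        linear_combination div_mul_cancel₀ (r.1.1 - p.1.1) h1'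
      refine ⟨(r.1.1 - p.1.1) / (p'.1.1 - p.1.1), div_ne_zero (sub_ne_zero.2 h2) h1', hx, ?_⟩
      rw [hp, hp', hr]
      linear_combination l.1.1 * hx
    obtain ⟨u, hu, uP, uP'⟩ := par b pA pB pP bA bB bP xAB xPA
    obtain ⟨v, hv, vQ, vQ'⟩ := par c pB pC pQ cB cC cQ xBC xQB
    obtain ⟨w, hw, wR, wR'⟩ := par a pC pA pR aC aA aR xAC.symm xRC
    rw [hB] at aA bA aC bB dA dB dC dP dQ dR
    exact onan_aux σ (m := d.1.1) (b := d.1.2) pA.2 pB.2 pC.2 xAB xAC hm aA aC bA bB dA dB dC hu hv hw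
      (by rw [uP, uP']; exact dP) (by rw [vQ, vQ']; exact dQ) (by rw [wR, wR']; exact dR)
      (by rw [uP, uP']; exact pP.2) (by rw [vQ, vQ']; exact pQ.2) (by rw [wR, wR']; exact pR.2)

/-! ### Counting independent sets of a supersaturated graph -/

section KW
variable {L : Type} [Fintype L] [DecidableEq L]

/-- The set `I` is independent for the relation `Adj`; in particular no element of `I` is related to
itself. -/
def Indep (Adj : L → L → Prop) (I : Finset L) : Prop := ∀ a ∈ I, ∀ b ∈ I, ¬ Adj a b

open Classical in
/-- The partition function of the hard-core model: independent subsets of `X`, each weighted by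
`lam` to the power of its size. -/
noncomputable def hardCore (Adj : L → L → Prop) (lam : ℝ) (X : Finset L) : ℝ :=
  ∑ I ∈ X.powerset.filter (Indep Adj), lam ^ I.card

omit [Fintype L] in
/-- Independent sets are split according to whether they contain `v`; those that do avoid the
neighbours `N` of `v`. -/
theorem hardCore_rec (Adj : L → L → Prop) {lam : ℝ} (hl : 0 ≤ lam) {X N : Finset L} {v : L}
    (hN : ∀ w ∈ N, Adj v w) :
    hardCore Adj lam X ≤ hardCore Adj lam (X.erase v) + lam * hardCore Adj lam (X \ N) := by
  classical
  unfold hardCore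
  rw [← sum_filter_add_sum_filter_not (X.powerset.filter (Indep Adj)) (fun I => v ∉ I)]
  refine add_le_add (sum_le_sum_of_subset_of_nonneg ?_ fun _ _ _ => by positivity) ?_
  · intro I
    simp only [mem_filter, mem_powerset]
    rintro ⟨⟨h1, h2⟩, h3⟩
    exact ⟨subset_erase.2 ⟨h1, h3⟩, h2⟩
  · rw [mul_sum]
    have hinj : Set.InjOn (fun I : Finset L => I.erase v)
        ((X.powerset.filter (Indep Adj)).filter fun I => ¬ v ∉ I) := by
      intro I hI J hJ e
      simp only [coe_filter, Set.mem_ofPred_eq, not_not] at hI hJ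
      rw [← insert_erase hI.2, ← insert_erase hJ.2]
      exact congrArg _ e
    calc _ = ∑ J ∈ ((X.powerset.filter (Indep Adj)).filter fun I => ¬ v ∉ I).image
              (fun I : Finset L => I.erase v), lam * lam ^ J.card := by
          rw [sum_image hinj]
          refine sum_congr rfl fun I hI => ?_
          simp only [mem_filter, not_not] at hI
          rw [← pow_succ', card_erase_add_one hI.2]
      _ ≤ _ := by
          refine sum_le_sum_of_subset_of_nonneg ?_ fun _ _ _ => by positivity
          intro J
          simp only [mem_image, mem_filter, mem_powerset, not_not]
          rintro ⟨I, ⟨⟨h1, h2⟩, h3⟩, rfl⟩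
          refine ⟨fun w hw => mem_sdiff.2 ⟨h1 (mem_of_mem_erase hw), fun hwN =>
            h2 v h3 w (mem_of_mem_erase hw) (hN w hwN)⟩, fun a ha b hb =>
            h2 a (mem_of_mem_erase ha) b (mem_of_mem_erase hb)⟩

omit [Fintype L] [DecidableEq L] in
theorem hardCore_le_exp (Adj : L → L → Prop) {lam : ℝ} (hl : 0 ≤ lam) (X : Finset L) :
    hardCore Adj lam X ≤ Real.exp (lam * X.card) := by
  classical
  calc _ ≤ ∑ I ∈ X.powerset, lam ^ I.card :=
        sum_le_sum_of_subset_of_nonneg (filter_subset _ _) fun _ _ _ => by positivity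
    _ = (lam + 1) ^ X.card := by
        rw [← sum_pow_mul_eq_add_pow]; simp
    _ ≤ Real.exp lam ^ X.card := by
        gcongr; exact Real.add_one_le_exp lam
    _ = _ := by rw [← Real.exp_nat_mul, mul_comm]

/-- The counting argument of Kleitman and Winston. If every set with at least `R` elements has a vertex
adjacent to a proportion `β` of it, then the recursion `hardCore_rec` can be used until the set has at
most `R` elements; passing to a non-neighbourhood shrinks the set by the factor `1 - β`, so this
happens at most `k` times, and each time there are at most `card L` possible vertices. -/
theorem hardCore_le (Adj : L → L → Prop) {lam β R : ℝ} (hl : 0 ≤ lam)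
    (h : ∀ X : Finset L, R ≤ X.card → ∃ v ∈ X, ∃ N ⊆ X, (∀ w ∈ N, Adj v w) ∧ β * X.card ≤ N.card)
    (hβ : β < 1) (k : ℕ) : ∀ X : Finset L, (1 - β) ^ k * X.card ≤ R →
    hardCore Adj lam X ≤ Real.exp (lam * R) * (1 + lam * Fintype.card L) ^ k := by
  induction k with
  | zero =>
    intro X hX
    refine (hardCore_le_exp Adj hl X).trans ?_
    simp only [pow_zero, one_mul, mul_one] at hX ⊢
    gcongr
  | succ k ih =>
    set E := Real.exp (lam * R) * (1 + lam * Fintype.card L) ^ k with hE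
    have hE0 : 0 ≤ E := by positivity
    have hE1 : Real.exp (lam * R) ≤ E := by
      rw [hE]
      refine le_mul_of_one_le_right (by positivity) (one_le_pow₀ ?_)
      have : 0 ≤ lam * Fintype.card L := by positivity
      linarith
    -- deleting vertices one at a time costs an additive `lam * E` for each
    have main : ∀ m : ℕ, ∀ X : Finset L, X.card = m → (1 - β) ^ (k+1) * X.card ≤ R →
        hardCore Adj lam X ≤ E * (1 + lam * m) := by
      intro m
      induction m with
      | zero =>
        intro X hX hR
        refine (hardCore_le_exp Adj hl X).trans ?_
        simp only [hX, Nat.cast_zero, mul_zero, add_zero, mul_one] at hR ⊢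
        refine le_trans ?_ hE1
        exact Real.exp_le_exp.2 (mul_nonneg hl hR)
      | succ m ihm =>
        intro X hX hR
        by_cases hXR : R ≤ X.card
        · obtain ⟨v, hv, N, hNX, hN, hb⟩ := h X hXR
          refine (hardCore_rec Adj hl hN).trans ?_
          have h1 : hardCore Adj lam (X.erase v) ≤ E * (1 + lam * m) := by
            refine ihm _ (by rw [card_erase_of_mem hv, hX]; rfl) (le_trans ?_ hR)
            have : (0:ℝ) ≤ (1 - β) ^ (k+1) := pow_nonneg (by linarith) _
            gcongr
            exact erase_subset _ _
          have h2 : hardCore Adj lam (X \ N) ≤ E := by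
            refine ih _ (le_trans ?_ hR)
            have : ((X \ N).card : ℝ) ≤ (1 - β) * X.card := by
              rw [cast_card_sdiff hNX]; linarith
            rw [pow_succ, mul_assoc]
            have : (0:ℝ) ≤ (1 - β) ^ k := pow_nonneg (by linarith) _
            gcongr
          push_cast
          nlinarith [mul_le_mul_of_nonneg_left h2 hl]
        · refine (hardCore_le_exp Adj hl X).trans ?_
          have : Real.exp (lam * X.card) ≤ E := by
            refine le_trans ?_ hE1
            gcongr
            exact (not_le.1 hXR).le
          refine this.trans (le_mul_of_one_le_right hE0 ?_)
          have : 0 ≤ lam * (m + 1 : ℕ) := by positivity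
          linarith
    intro X hX
    refine (main _ X rfl hX).trans ?_
    rw [pow_succ, ← mul_assoc]
    gcongr
    exact card_le_univ X

omit [DecidableEq L] in
theorem card_indep_le (Adj : L → L → Prop) {lam : ℝ} (hl : 0 ≤ lam) (s : ℕ) (F : Finset (Finset L))
    (hF : ∀ I ∈ F, I.card = s ∧ Indep Adj I) :
    F.card * lam ^ s ≤ hardCore Adj lam univ := by
  classical
  unfold hardCore
  calc F.card * lam ^ s = ∑ I ∈ F, lam ^ I.card := by
        rw [sum_congr rfl fun I hI => by rw [(hF I hI).1], sum_const, nsmul_eq_mul]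
    _ ≤ _ := by
        refine sum_le_sum_of_subset_of_nonneg ?_ fun _ _ _ => by positivity
        intro I hI
        simp [(hF I hI).2]

/-- A union bound over `F` for a uniformly random set of `n` elements: it contains a given `s`-set with
probability at most `(n / card L) ^ s`. -/
theorem exists_sample (n s : ℕ) (F : Finset (Finset L)) (hF : ∀ I ∈ F, I.card = s)
    (hn : n ≤ Fintype.card L)
    (h : F.card * (n : ℝ) ^ s < (Fintype.card L : ℝ) ^ s) :
    ∃ W : Finset L, W.card = n ∧ ∀ I ∈ F, ¬ I ⊆ W := by
  classical
  by_contra! hcon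
  set N := Fintype.card L
  by_cases hs : n < s
  · obtain ⟨W, -, hW⟩ := exists_subset_card_eq (s := (univ : Finset L)) (n := n) (by simpa)
    obtain ⟨I, hI, hIW⟩ := hcon W hW
    have := card_le_card hIW
    have := hF I hI
    omega
  have hs : s ≤ n := not_lt.1 hs
  have h1 : N.choose n ≤ F.card * (N - s).choose (n - s) := by
    calc N.choose n = (powersetCard n (univ : Finset L)).card := by
          rw [card_powersetCard]; rfl
      _ ≤ (F.biUnion fun I => (powersetCard n univ).filter fun W => I ⊆ W).card := by
          refine card_le_card fun W hW => ?_
          obtain ⟨I, hI, hIW⟩ := hcon W (mem_powersetCard.1 hW).2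
          exact mem_biUnion.2 ⟨I, hI, mem_filter.2 ⟨hW, hIW⟩⟩
      _ ≤ _ := by
          refine card_biUnion_le_card_mul _ _ _ fun I hI => ?_
          calc _ ≤ (powersetCard (n - s) (univ \ I)).card := by
                refine card_le_card_of_injOn (fun W => W \ I) ?_ ?_
                · intro W hW
                  simp only [coe_filter, mem_powersetCard, Set.mem_ofPred_eq, mem_coe] at hW ⊢
                  refine ⟨sdiff_subset_sdiff (subset_univ _) le_rfl, ?_⟩
                  rw [card_sdiff_of_subset hW.2, hW.1.2, hF I hI]
                · intro W hW W' hW' e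
                  simp only [coe_filter, Set.mem_ofPred_eq] at hW hW'
                  rw [← sdiff_union_of_subset hW.2, ← sdiff_union_of_subset hW'.2]
                  exact congrArg (· ∪ I) e
            _ = _ := by
                rw [card_powersetCard, card_sdiff_of_subset (subset_univ _), card_univ, hF I hI]
  have h2 := Nat.choose_mul (n := N) (k := n) (s := s) hs
  have h3 : (n.choose s : ℝ) * (N : ℝ) ^ s ≤ N.choose s * (n : ℝ) ^ s := by
    have : ∀ s, n.descFactorial s * N ^ s ≤ N.descFactorial s * n ^ s := by
      intro s
      induction s with
      | zero => simp
      | succ s ih =>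
        rw [Nat.descFactorial_succ, Nat.descFactorial_succ, pow_succ, pow_succ]
        have : (n - s) * N ≤ (N - s) * n := by
          rw [Nat.sub_mul, Nat.sub_mul, mul_comm n N]
          have := Nat.mul_le_mul_left s hn
          omega
        calc _ = ((n - s) * N) * (n.descFactorial s * N ^ s) := by ring
          _ ≤ ((N - s) * n) * (N.descFactorial s * n ^ s) := Nat.mul_le_mul this ih
          _ = _ := by ring
    have h := this s
    rw [Nat.descFactorial_eq_factorial_mul_choose, Nat.descFactorial_eq_factorial_mul_choose,
      mul_assoc, mul_assoc] at h
    exact_mod_cast Nat.le_of_mul_le_mul_left h (Nat.factorial_pos s)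
  have p1 : 0 < (N - s).choose (n - s) := Nat.choose_pos (by omega)
  have p2 : 0 < N.choose s := Nat.choose_pos (by omega)
  have h4 : N.choose s ≤ F.card * n.choose s := by
    refine Nat.le_of_mul_le_mul_right ?_ p1
    calc _ = N.choose n * n.choose s := h2.symm
      _ ≤ _ := Nat.mul_le_mul_right _ h1
      _ = _ := by ring
  have h4' : (N.choose s : ℝ) ≤ F.card * n.choose s := by exact_mod_cast h4
  have p3 : (0:ℝ) < n.choose s := by exact_mod_cast Nat.choose_pos hs
  have : (n.choose s : ℝ) * (N:ℝ)^s ≤ n.choose s * (F.card * (n:ℝ)^s) := by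
    calc _ ≤ _ := h3
      _ ≤ (F.card * n.choose s) * (n:ℝ)^s := by gcongr
      _ = _ := by ring
  exact absurd (le_of_mul_le_mul_left this p3) (not_le.2 h)
end KW

/-! ### A random labelling of the lines at every point -/

section Random
variable {P L : Type} [Fintype P] [Fintype L] [DecidableEq L]

/-- The number of elements of `S` labelled `c` by `f`. -/
def labelCount (S : Finset L) (f : L → Fin 3) (c : Fin 3) : ℕ := (S.filter fun l => f l = c).card

/-- An exponential moment of the number of elements labelled `c`, as a sum over all labellings: each
element of `S` contributes the factor `(2 + e⁻¹) / 3 ≤ e ^ (-1/5)` independently. -/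
theorem sum_exp_labelCount (S : Finset L) (c : Fin 3) :
    ∑ f : L → Fin 3, Real.exp (-(labelCount S f c : ℝ)) ≤
      3 ^ Fintype.card L * Real.exp (-(S.card : ℝ) / 5) := by
  have e : ∀ f : L → Fin 3, Real.exp (-(labelCount S f c : ℝ)) =
      ∏ l, if l ∈ S ∧ f l = c then Real.exp (-1) else 1 := by
    intro f
    rw [prod_ite, prod_const_one, mul_one, prod_const, ← Real.exp_nat_mul]
    congr 1
    rw [mul_neg_one, labelCount]
    congr 3
    ext l; simp
  simp only [e]
  have := (prod_univ_sum (fun _ : L => (univ : Finset (Fin 3)))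
    (fun l d => if l ∈ S ∧ d = c then Real.exp (-1) else (1:ℝ)))
  rw [Fintype.piFinset_univ] at this
  rw [← this]
  have h1 : Real.exp (-1) < 0.3679 := by
    have := Real.exp_neg_one_lt_d9; linarith
  have h2 : (0.8:ℝ) ≤ Real.exp (-1/5) := by
    have := Real.add_one_le_exp (-1/5 : ℝ); linarith
  calc _ ≤ ∏ l : L, 3 * (if l ∈ S then Real.exp (-1/5) else 1) := by
        refine prod_le_prod (fun l _ => sum_nonneg fun d _ => by positivity) fun l _ => ?_
        by_cases hl : l ∈ S
        · simp only [hl, true_and, if_true]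
          rw [sum_ite, filter_eq']
          simp only [mem_univ, if_true, sum_const, card_singleton, one_smul, nsmul_eq_mul, mul_one]
          rw [filter_ne', card_erase_of_mem (mem_univ _)]
          simp only [card_univ, Fintype.card_fin]
          norm_num at h1 h2 ⊢
          linarith
        · simp [hl]
    _ = _ := by
        rw [prod_mul_distrib, prod_const, prod_ite, prod_const_one, mul_one, prod_const, card_univ,
          ← Real.exp_nat_mul]
        congr 2
        simp only [filter_mem_eq_inter, univ_inter]
        ring

/-- The exponential moment for the sum over all points of the smaller of two label counts. Bounding the
minimum costs a factor `2 ≤ e` for each of the at most `q ^ 3` points, and the size of `X` is what makes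
this at most the square root of the gain. -/
theorem sum_exp_min [DecidableEq P] (B : P → Finset L) (q : ℕ) (hP : Fintype.card P ≤ q ^ 3)
    (hinc : ∀ X : Finset L, q * X.card ≤ ∑ p, (X ∩ B p).card) (X : Finset L)
    (hX : 10 * q ^ 2 ≤ X.card) (i : Fin 3) :
    ∑ ω : P → L → Fin 3, Real.exp (-∑ p, (min (labelCount (X ∩ B p) (ω p) 0)
      (labelCount (X ∩ B p) (ω p) i) : ℝ)) ≤
      Fintype.card (P → L → Fin 3) * Real.exp (-(q * X.card : ℝ) / 10) := by
  classical
  have e : ∀ ω : P → L → Fin 3, Real.exp (-∑ p, (min (labelCount (X ∩ B p) (ω p) 0)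
      (labelCount (X ∩ B p) (ω p) i) : ℝ)) = ∏ p, Real.exp (-(min (labelCount (X ∩ B p) (ω p) 0)
      (labelCount (X ∩ B p) (ω p) i) : ℝ)) := by
    intro ω; rw [← sum_neg_distrib, Real.exp_sum]
  simp only [e]
  have := (prod_univ_sum (fun _ : P => (univ : Finset (L → Fin 3)))
    (fun p f => Real.exp (-(min (labelCount (X ∩ B p) f 0) (labelCount (X ∩ B p) f i) : ℝ))))
  rw [Fintype.piFinset_univ] at this
  rw [← this]
  have step : ∀ p, ∑ f : L → Fin 3, Real.exp (-(min (labelCount (X ∩ B p) f 0)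
      (labelCount (X ∩ B p) f i) : ℝ)) ≤
      3 ^ Fintype.card L * Real.exp (1 + -((X ∩ B p).card : ℝ) / 5) := by
    intro p
    calc _ ≤ ∑ f : L → Fin 3, (Real.exp (-(labelCount (X ∩ B p) f 0 : ℝ)) +
            Real.exp (-(labelCount (X ∩ B p) f i : ℝ))) := by
          refine sum_le_sum fun f _ => ?_
          have h1 := Real.exp_pos (-(labelCount (X ∩ B p) f 0 : ℝ))
          have h2 := Real.exp_pos (-(labelCount (X ∩ B p) f i : ℝ))
          rcases min_choice (labelCount (X ∩ B p) f 0 : ℝ) (labelCount (X ∩ B p) f i : ℝ) with h | h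
            <;> rw [h] <;> linarith
      _ ≤ 3 ^ Fintype.card L * Real.exp (-((X ∩ B p).card : ℝ) / 5) +
            3 ^ Fintype.card L * Real.exp (-((X ∩ B p).card : ℝ) / 5) := by
          rw [sum_add_distrib]
          exact add_le_add (sum_exp_labelCount _ _) (sum_exp_labelCount _ _)
      _ = 3 ^ Fintype.card L * (2 * Real.exp (-((X ∩ B p).card : ℝ) / 5)) := by ring
      _ ≤ _ := by
          rw [Real.exp_add]
          gcongr
          have := Real.add_one_le_exp (1:ℝ); linarith
  calc _ ≤ ∏ p, (3 ^ Fintype.card L * Real.exp (1 + -((X ∩ B p).card : ℝ) / 5)) :=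
        prod_le_prod (fun p _ => sum_nonneg fun f _ => (Real.exp_pos _).le) fun p _ => step p
    _ = (3 ^ Fintype.card L) ^ Fintype.card P *
          Real.exp (Fintype.card P - (∑ p, (X ∩ B p).card : ℕ) / 5) := by
        rw [prod_mul_distrib, prod_const, card_univ, ← Real.exp_sum, sum_add_distrib]
        congr 2
        push_cast
        rw [sum_const, card_univ, nsmul_eq_mul, mul_one, ← sum_div, sum_neg_distrib]
        ring
    _ ≤ _ := by
        have h1 : (Fintype.card P : ℝ) ≤ q ^ 3 := by exact_mod_cast hP
        have h2 : (q * X.card : ℝ) ≤ (∑ p, (X ∩ B p).card : ℕ) := by exact_mod_cast hinc X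
        have h3 : (10 * q ^ 2 : ℝ) ≤ X.card := by exact_mod_cast hX
        have h4 : (10 * q ^ 3 : ℝ) ≤ q * X.card := by
          calc (10 * q ^ 3 : ℝ) = q * (10 * q ^ 2) := by ring
            _ ≤ _ := by gcongr
        have : (Fintype.card (P → L → Fin 3) : ℝ) = (3 ^ Fintype.card L) ^ Fintype.card P := by
          simp [Fintype.card_pi]
        rw [this]
        gcongr
        linarith

/-- Some labelling is balanced for all large sets `X` at once: a union bound over `X` in which the failure
probability `2 * exp (-q / 20) ^ card X` is summed over all nonempty `X`. -/
theorem exists_labelling [DecidableEq P] (B : P → Finset L) (q : ℕ) (hP : Fintype.card P ≤ q ^ 3)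
    (hinc : ∀ X : Finset L, q * X.card ≤ ∑ p, (X ∩ B p).card)
    (hq : Fintype.card L * Real.exp (-(q:ℝ) / 20) ≤ 1 / 4) :
    ∃ ω : P → L → Fin 3, ∀ X : Finset L, X.Nonempty → 10 * q ^ 2 ≤ X.card → ∀ i : Fin 3, i ≠ 0 →
      (q * X.card : ℝ) / 20 ≤ ∑ p, (min (labelCount (X ∩ B p) (ω p) 0)
      (labelCount (X ∩ B p) (ω p) i) : ℝ) := by
  classical
  by_contra! hcon
  set M : (P → L → Fin 3) → Finset L → Fin 3 → ℝ := fun ω X i =>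
    ∑ p, (min (labelCount (X ∩ B p) (ω p) 0) (labelCount (X ∩ B p) (ω p) i) : ℝ) with hM
  set big : Finset (Finset L) := univ.filter fun X => X.Nonempty ∧ 10 * q ^ 2 ≤ X.card with hbig
  set Ω := Fintype.card (P → L → Fin 3) with hΩ
  have hΩ0 : 0 < (Ω : ℝ) := by
    have : 0 < Ω := Fintype.card_pos
    exact_mod_cast this
  set ε := Real.exp (-(q:ℝ) / 20) with hε
  have h1 : (Ω : ℝ) ≤ ∑ ω : P → L → Fin 3, ∑ X ∈ big, ∑ i ∈ ({1, 2} : Finset (Fin 3)),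
      Real.exp ((q * X.card : ℝ) / 20 - M ω X i) := by
    rw [hΩ, ← card_univ, ← nsmul_one, ← sum_const]
    refine sum_le_sum fun ω _ => ?_
    obtain ⟨X, hX, hXq, i, hi, hlt⟩ := hcon ω
    have hi' : i ∈ ({1, 2} : Finset (Fin 3)) := by fin_cases i <;> simp_all
    have hXb : X ∈ big := by simp [hbig, hX, hXq]
    calc (1:ℝ) ≤ Real.exp ((q * X.card : ℝ) / 20 - M ω X i) :=
          Real.one_le_exp (by simp only [hM]; linarith)
      _ ≤ ∑ i ∈ ({1, 2} : Finset (Fin 3)), Real.exp ((q * X.card : ℝ) / 20 - M ω X i) :=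
          single_le_sum (f := fun i => Real.exp ((q * X.card : ℝ) / 20 - M ω X i))
            (fun _ _ => (Real.exp_pos _).le) hi'
      _ ≤ _ := single_le_sum (f := fun X : Finset L => ∑ i ∈ ({1, 2} : Finset (Fin 3)),
            Real.exp ((q * X.card : ℝ) / 20 - M ω X i))
            (fun _ _ => sum_nonneg fun _ _ => (Real.exp_pos _).le) hXb
  have h2 : ∑ ω : P → L → Fin 3, ∑ X ∈ big, ∑ i ∈ ({1, 2} : Finset (Fin 3)),
      Real.exp ((q * X.card : ℝ) / 20 - M ω X i) ≤ ∑ X ∈ big, Ω * (2 * ε ^ X.card) := by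
    rw [sum_comm]
    refine sum_le_sum fun X hX => ?_
    simp only [hbig, mem_filter, mem_univ, true_and] at hX
    rw [sum_comm]
    refine (sum_le_card_nsmul _ _ (Ω * ε ^ X.card) fun i _ => ?_).trans (le_of_eq ?_)
    · simp only [sub_eq_add_neg, Real.exp_add]
      rw [← mul_sum]
      refine (mul_le_mul_of_nonneg_left (sum_exp_min B q hP hinc X hX.2 i)
        (Real.exp_pos _).le).trans (le_of_eq ?_)
      rw [hε, ← Real.exp_nat_mul, mul_left_comm, ← Real.exp_add]
      congr 2
      ring
    · rw [card_pair (by decide), nsmul_eq_mul]; push_cast; ring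
  have h3 : ∑ X ∈ big, ε ^ X.card ≤ Real.exp (1/4) - 1 := by
    have hε0 : 0 ≤ ε := (Real.exp_pos _).le
    have : ∑ X ∈ big, ε ^ X.card + 1 ≤ (ε + 1) ^ Fintype.card L := by
      have hemp : (∅ : Finset L) ∉ big := by simp [hbig]
      calc _ = ∑ X ∈ insert ∅ big, ε ^ X.card := by
            rw [sum_insert hemp]; simp [add_comm]
        _ ≤ ∑ X ∈ (univ : Finset L).powerset, ε ^ X.card :=
            sum_le_sum_of_subset_of_nonneg (by simp) fun _ _ _ => by positivity
        _ = _ := by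
            rw [← card_univ, ← sum_pow_mul_eq_add_pow]; simp
    have h' : (ε + 1) ^ Fintype.card L ≤ Real.exp (1/4) := by
      calc _ ≤ Real.exp ε ^ Fintype.card L := by gcongr; exact Real.add_one_le_exp ε
        _ = Real.exp (Fintype.card L * ε) := by rw [Real.exp_nat_mul]
        _ ≤ _ := by gcongr
    linarith
  have h4 : Real.exp (1/4) < 3 / 2 := by
    have h : Real.exp (1/4) ^ 4 = Real.exp 1 := by
      rw [← Real.exp_nat_mul]; norm_num
    have := Real.exp_one_lt_d9
    by_contra! hc
    have : (3/2:ℝ)^4 ≤ Real.exp (1/4) ^ 4 := by gcongr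
    norm_num at this
    linarith
  have h5 := h1.trans h2
  rw [← mul_sum, ← mul_sum] at h5
  nlinarith

/-- By the Cauchy-Schwarz inequality over the points, a balanced labelling yields many pairs labelled
`0`, `i` inside `X`, hence a line of large degree. -/
theorem exists_large_degree (B : P → Finset L) (q : ℕ) (hq : 0 < q) (hP : Fintype.card P ≤ q ^ 3)
    (hlin : ∀ l l' p p', l ≠ l' → l ∈ B p → l' ∈ B p → l ∈ B p' → l' ∈ B p' → p = p')
    (ω : P → L → Fin 3) (X : Finset L) (hX : X.Nonempty) (i : Fin 3) (hi : i ≠ 0)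
    (h : (q * X.card : ℝ) / 20 ≤ ∑ p, (min (labelCount (X ∩ B p) (ω p) 0)
      (labelCount (X ∩ B p) (ω p) i) : ℝ)) :
    ∃ v ∈ X, ∃ N ⊆ X, (∀ w ∈ N, ∃ p, v ∈ B p ∧ w ∈ B p ∧ ω p v = 0 ∧ ω p w = i) ∧
      1 / (400 * q : ℝ) * X.card ≤ N.card := by
  classical
  by_contra! hcon
  set m : P → ℝ := fun p => min (labelCount (X ∩ B p) (ω p) 0 : ℝ)
      (labelCount (X ∩ B p) (ω p) i : ℝ) with hm
  have hm0 : ∀ p, 0 ≤ m p := fun p => by positivity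
  have hXc : (0:ℝ) < X.card := by exact_mod_cast hX.card_pos
  have hq' : (0:ℝ) < q := by exact_mod_cast hq
  set D : L → Finset L := fun v => X.filter fun w => ∃ p, v ∈ B p ∧ w ∈ B p ∧ ω p v = 0 ∧ ω p w = i
    with hD
  have hdeg : ∑ v ∈ X, ((D v).card : ℝ) < X.card * (1 / (400 * q : ℝ) * X.card) := by
    rw [← nsmul_eq_mul, ← sum_const]
    refine sum_lt_sum_of_nonempty hX fun v hv => ?_
    exact hcon v hv (D v) (filter_subset _ _) fun w hw => (mem_filter.1 hw).2
  have hcount : ∑ p, m p ^ 2 ≤ ∑ v ∈ X, ((D v).card : ℝ) := by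
    have : ∑ p, labelCount (X ∩ B p) (ω p) 0 * labelCount (X ∩ B p) (ω p) i ≤
        ∑ v ∈ X, (D v).card := by
      simp only [labelCount, ← card_product]
      rw [← card_sigma, ← card_sigma]
      refine card_le_card_of_injOn (fun z => ⟨z.2.1, z.2.2⟩) ?_ ?_
      · rintro ⟨p, v, w⟩ hz
        simp only [coe_sigma, Set.mem_sigma_iff, mem_coe, mem_product, mem_filter, mem_inter, mem_univ,
          true_and, hD] at hz ⊢
        exact ⟨hz.1.1.1, hz.2.1.1, p, hz.1.1.2, hz.2.1.2, hz.1.2, hz.2.2⟩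
      · rintro ⟨p, v, w⟩ hz ⟨p', v', w'⟩ hz' e
        simp only [mem_coe, mem_product, mem_filter, mem_inter, mem_univ,
          true_and, mem_sigma] at hz hz'
        simp only [Sigma.mk.injEq, heq_eq_eq] at e
        obtain ⟨rfl, rfl⟩ := e
        have hvw : v ≠ w := by
          rintro rfl; exact hi (hz.2.2.symm.trans hz.1.2)
        obtain rfl := hlin v w p p' hvw hz.1.1.2 hz.2.1.2 hz'.1.1.2 hz'.2.1.2
        rfl
    calc _ ≤ ∑ p, ((labelCount (X ∩ B p) (ω p) 0 : ℝ) * labelCount (X ∩ B p) (ω p) i) := by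
          refine sum_le_sum fun p _ => ?_
          rw [sq]
          exact mul_le_mul (min_le_left _ _) (min_le_right _ _) (hm0 p) (by positivity)
      _ ≤ _ := by exact_mod_cast this
  have hcs : (∑ p, m p) ^ 2 ≤ Fintype.card P * ∑ p, m p ^ 2 := by
    have := sq_sum_le_card_mul_sum_sq (s := (univ : Finset P)) (f := m)
    simpa using this
  have hP' : (Fintype.card P : ℝ) ≤ q ^ 3 := by exact_mod_cast hP
  have hs0 : 0 ≤ ∑ p, m p ^ 2 := sum_nonneg fun p _ => sq_nonneg _
  have h1 : ((q * X.card : ℝ) / 20) ^ 2 ≤ q ^ 3 * ∑ p, m p ^ 2 := by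
    calc _ ≤ (∑ p, m p) ^ 2 := by gcongr
      _ ≤ _ := hcs
      _ ≤ _ := by gcongr
  have h2 : (q:ℝ) ^ 3 * ∑ p, m p ^ 2 < q ^ 3 * (X.card * (1 / (400 * q : ℝ) * X.card)) := by
    gcongr; linarith
  have h3 : (q:ℝ) ^ 3 * (X.card * (1 / (400 * q : ℝ) * X.card)) = ((q * X.card : ℝ) / 20) ^ 2 := by
    field_simp; ring
  linarith
end Random

/-! ### The colouring of pairs of lines -/

section Colouring
variable {P L : Type} [DecidableEq L]

/-- The lines `l` and `l'` meet in a point at which one of them is labelled `0` and the other `i`. -/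
def LabAdj (B : P → Finset L) (ω : P → L → Fin 3) (i : Fin 3) (l l' : L) : Prop :=
  ∃ p, l ∈ B p ∧ l' ∈ B p ∧ ((ω p l = 0 ∧ ω p l' = i) ∨ (ω p l = i ∧ ω p l' = 0))

omit [DecidableEq L] in
theorem LabAdj.symm {B : P → Finset L} {ω : P → L → Fin 3} {i : Fin 3} {l l' : L}
    (h : LabAdj B ω i l l') : LabAdj B ω i l' l := by
  obtain ⟨p, h1, h2, h3⟩ := h
  exact ⟨p, h2, h1, h3.symm.imp And.symm And.symm⟩

variable [Fintype P] [Fintype L]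

/-- Two distinct lines meet in at most one point, which determines their labels there. -/
theorem LabAdj.exclusive {B : P → Finset L} {q : ℕ} (hB : IsONanFree B q) {ω : P → L → Fin 3}
    {l l' : L} (hne : l ≠ l') (h1 : LabAdj B ω 1 l l') (h2 : LabAdj B ω 2 l l') : False := by
  obtain ⟨p, a, b, h⟩ := h1
  obtain ⟨p', a', b', h'⟩ := h2
  obtain rfl := hB.linear l l' p p' hne a b a' b'
  rcases h with ⟨h, k⟩ | ⟨h, k⟩ <;> rcases h' with ⟨h', k'⟩ | ⟨h', k'⟩ <;>
    simp_all

/-- The graph of pairs of lines of colour `0` or `1` has no complete subgraph on four vertices: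
at a common point it is bipartite, so no three of the four lines are concurrent, and the four lines
would form an O'Nan configuration. -/
theorem no_four_joined {B : P → Finset L} {q : ℕ} (hB : IsONanFree B q) {ω : P → L → Fin 3}
    {a b c d : L} (ab : a ≠ b) (ac : a ≠ c) (ad : a ≠ d) (bc : b ≠ c) (bd : b ≠ d)
    (hab : LabAdj B ω 1 a b ∨ LabAdj B ω 2 a b) (hac : LabAdj B ω 1 a c ∨ LabAdj B ω 2 a c)
    (had : LabAdj B ω 1 a d ∨ LabAdj B ω 2 a d) (hbc : LabAdj B ω 1 b c ∨ LabAdj B ω 2 b c)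
    (hbd : LabAdj B ω 1 b d ∨ LabAdj B ω 2 b d) (hcd : LabAdj B ω 1 c d ∨ LabAdj B ω 2 c d) :
    False := by
  have key : ∀ l l', LabAdj B ω 1 l l' ∨ LabAdj B ω 2 l l' →
      ∃ p, l ∈ B p ∧ l' ∈ B p ∧ (ω p l = 0 ↔ ω p l' ≠ 0) := by
    rintro l l' (⟨p, h1, h2, h3⟩ | ⟨p, h1, h2, h3⟩) <;> refine ⟨p, h1, h2, ?_⟩ <;>
      rcases h3 with ⟨h, k⟩ | ⟨h, k⟩ <;> simp [h, k]
  have parity : ∀ x y z : Prop, (x ↔ ¬ y) → (x ↔ ¬ z) → (y ↔ ¬ z) → False := by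
    intro x y z h1 h2 h3
    by_cases x <;> simp_all
  have conc : ∀ l₁ l₂ l₃ p₁₂ p₁₃ p₂₃, l₁ ≠ l₃ → l₂ ≠ l₃ →
      l₁ ∈ B p₁₂ → l₂ ∈ B p₁₂ → l₁ ∈ B p₁₃ → l₃ ∈ B p₁₃ → l₂ ∈ B p₂₃ → l₃ ∈ B p₂₃ →
      (ω p₁₂ l₁ = 0 ↔ ω p₁₂ l₂ ≠ 0) → (ω p₁₃ l₁ = 0 ↔ ω p₁₃ l₃ ≠ 0) →
      (ω p₂₃ l₂ = 0 ↔ ω p₂₃ l₃ ≠ 0) → l₃ ∉ B p₁₂ := by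
    intro l₁ l₂ l₃ p₁₂ p₁₃ p₂₃ h13 h23 m1 m2 m3 m4 m5 m6 e1 e2 e3 hmem
    obtain rfl := hB.linear l₁ l₃ p₁₂ p₁₃ h13 m1 hmem m3 m4
    obtain rfl := hB.linear l₂ l₃ p₁₂ p₂₃ h23 m2 hmem m5 m6
    exact parity _ _ _ e1 e2 e3
  obtain ⟨pab, ab1, ab2, ab3⟩ := key a b hab
  obtain ⟨pac, ac1, ac2, ac3⟩ := key a c hac
  obtain ⟨pad, ad1, ad2, ad3⟩ := key a d had
  obtain ⟨pbc, bc1, bc2, bc3⟩ := key b c hbc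
  obtain ⟨pbd, bd1, bd2, bd3⟩ := key b d hbd
  obtain ⟨pcd, cd1, cd2, cd3⟩ := key c d hcd
  have cd : c ≠ d := by rintro rfl; exact iff_not_self cd3
  exact hB.onan a b c d pab pac pad pbc pbd pcd ab ab1 ab2 ac1 ac2 ad1 ad2 bc1 bc2 bd1 bd2 cd1 cd2
    (conc a b c pab pac pbc ac bc ab1 ab2 ac1 ac2 bc1 bc2 ab3 ac3 bc3)
    (conc a b d pab pad pbd ad bd ab1 ab2 ad1 ad2 bd1 bd2 ab3 ad3 bd3)
    (conc a c d pac pad pcd ad cd ac1 ac2 ad1 ad2 cd1 cd2 ac3 ad3 cd3)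
    (conc b c d pbc pbd pcd bd cd bc1 bc2 bd1 bd2 cd1 cd2 bc3 bd3 cd3)

/-- The incidences between `X` and the points, counted in two ways. -/
theorem incidence_count {B : P → Finset L} {q : ℕ} (hB : IsONanFree B q) (X : Finset L) :
    q * X.card ≤ ∑ p, (X ∩ B p).card := by
  classical
  have : ∑ p, (X ∩ B p).card = ∑ l ∈ X, (univ.filter fun p => l ∈ B p).card := by
    have := sum_card_bipartiteAbove_eq_sum_card_bipartiteBelow (s := X) (t := (univ : Finset P))
      (fun l p => l ∈ B p)
    simp only [bipartiteAbove, bipartiteBelow] at this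
    rw [this]
    refine sum_congr rfl fun p _ => ?_
    rw [filter_mem_eq_inter]
  rw [this, mul_comm, ← smul_eq_mul]
  exact card_nsmul_le_sum _ _ _ fun l _ => hB.line_size l

/-- Restricting the labelled line geometry to `n` lines that contain no `s`-set independent for
either label graph gives the required colouring. -/
theorem colouring_of_lines {B : P → Finset L} {q : ℕ} (hB : IsONanFree B q) (ω : P → L → Fin 3)
    (n s : ℕ) (W : Finset L) (hW : W.card = n)
    (hs : ∀ i : Fin 3, i ≠ 0 → ∀ I : Finset L, I.card = s → Indep (LabAdj B ω i) I → ¬ I ⊆ W) :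
    ∃ c'' : Sym2 (Fin n) → Fin 3, ¬ HasCopy c'' cP4 ∧
      ∀ X : Finset (Fin n), IsHomog c'' X → X.card ≤ s + 3 := by
  classical
  let e : Fin n ≃ W := (W.equivFinOfCardEq hW).symm
  let f : Fin n → L := fun x => (e x : L)
  have hf : Function.Injective f := Subtype.val_injective.comp e.injective
  let A : Fin 3 → Fin n → Fin n → Prop := fun i x y => LabAdj B ω i (f x) (f y)
  have hA : ∀ i x y, A i x y ↔ A i y x := fun i x y => ⟨LabAdj.symm, LabAdj.symm⟩
  -- a pair joined for neither label, in particular a pair of lines that do not meet, has colour `2`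
  let g : Fin n → Fin n → Fin 3 := fun x y => if A 1 x y then 0 else if A 2 x y then 1 else 2
  have hg : ∀ x y, g x y = g y x := by
    intro x y; simp only [g, hA 1 x y, hA 2 x y]
  have hjoin : ∀ x y, g x y ≠ 2 → A 1 x y ∨ A 2 x y := by
    intro x y h
    by_contra! hc
    exact h (by simp [g, hc.1, hc.2])
  have four : ∀ x : Fin 4 → Fin n, Function.Injective x →
      (∀ i j, i ≠ j → g (x i) (x j) ≠ 2) → False := by
    intro x hx h
    have ne : ∀ i j, i ≠ j → f (x i) ≠ f (x j) := fun i j hij e => hij (hx (hf e))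
    have jn : ∀ i j, i ≠ j → A 1 (x i) (x j) ∨ A 2 (x i) (x j) := fun i j hij =>
      hjoin _ _ (h i j hij)
    exact no_four_joined hB (ne 0 1 (by decide)) (ne 0 2 (by decide)) (ne 0 3 (by decide))
      (ne 1 2 (by decide)) (ne 1 3 (by decide)) (jn 0 1 (by decide)) (jn 0 2 (by decide))
      (jn 0 3 (by decide)) (jn 1 2 (by decide)) (jn 1 3 (by decide)) (jn 2 3 (by decide))
  refine ⟨Sym2.lift ⟨g, hg⟩, ?_, ?_⟩
  · rintro ⟨φ, hφ⟩
    refine four φ φ.injective fun i j hij h => ?_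
    have h1 := hφ i j hij
    rw [Sym2.lift_mk] at h1
    simp only [h] at h1
    have := (cP4 s(i, j)).isLt
    rw [← h1] at this
    exact absurd this (by decide)
  · rintro X ⟨i, hi⟩
    simp only [Sym2.lift_mk] at hi
    have indep : ∀ j : Fin 3, j ≠ 0 → (∀ x ∈ X, ∀ y ∈ X, x ≠ y → ¬ A j x y) → X.card ≤ s + 3 := by
      intro j hj h
      by_contra! hlt
      obtain ⟨Y, hY, hYs⟩ := exists_subset_card_eq (s := X) (n := s) (by omega)
      refine hs j hj (Y.image f) (by rw [card_image_of_injective _ hf, hYs]) ?_ ?_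
      · intro a ha b hb hab
        obtain ⟨x, hx, rfl⟩ := mem_image.1 ha
        obtain ⟨y, hy, rfl⟩ := mem_image.1 hb
        by_cases hxy : x = y
        · subst hxy
          obtain ⟨p, -, -, h⟩ := hab
          rcases h with ⟨h, k⟩ | ⟨h, k⟩
          · exact hj (k.symm.trans h)
          · exact hj (h.symm.trans k)
        · exact h x (hY hx) y (hY hy) hxy hab
      · intro a ha
        obtain ⟨x, hx, rfl⟩ := mem_image.1 ha
        exact (e x).2
    fin_cases i
    · refine indep 1 (by decide) fun x hx y hy hxy h => hi x hx y hy hxy ?_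
      simp [g, h]
    · refine indep 2 (by decide) fun x hx y hy hxy h => hi x hx y hy hxy ?_
      have : ¬ A 1 x y := fun h' => LabAdj.exclusive hB (fun e => hxy (hf e)) h' h
      simp [g, h, this]
      -- a set without colour `2` has at most three elements
    · by_contra! hlt
      obtain ⟨Y, hY, hY4⟩ := exists_subset_card_eq (s := X) (n := 4) (by omega)
      let x := (Y.equivFinOfCardEq hY4).symm
      refine four (fun i => x i) (Subtype.val_injective.comp x.injective) fun i j hij => ?_
      exact hi _ (hY (x i).2) _ (hY (x j).2) fun e => hij (x.injective (Subtype.ext e))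
end Colouring

/-! ### Choice of parameters -/

section Parameters

/-- The colouring exists as soon as the number `s` makes the union bound over independent `s`-sets
succeed; `k` is the number of times the recursion passes to a non-neighbourhood. -/
theorem exists_colouring (q n k s : ℕ) [hq : Fact q.Prime] (hn : n ≤ q ^ 3)
    (hexp : (q : ℝ) ^ 4 * Real.exp (-(q : ℝ) / 20) ≤ 1 / 4)
    (hk : (1 - 1 / (400 * q : ℝ)) ^ k * (q : ℝ) ^ 4 ≤ 10 * q ^ 2)
    (hs : 2 * (Real.exp (200 * q) * (1 + 20 * (q : ℝ) ^ 3) ^ k) < 10 ^ s) :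
    ∃ c'' : Sym2 (Fin n) → Fin 3, ¬ HasCopy c'' cP4 ∧
      ∀ X : Finset (Fin n), IsHomog c'' X → X.card ≤ s + 3 := by
  classical
  obtain ⟨P, L, _, _, _, B, hB⟩ := exists_onanFree q
  have hq2 : 2 ≤ q := hq.out.two_le
  have hqr : (2 : ℝ) ≤ q := by exact_mod_cast hq2
  have hq0 : (0 : ℝ) < q := by linarith
  have hLle : (Fintype.card L : ℝ) ≤ q ^ 4 := by exact_mod_cast hB.card_lines_le
  have hLge : (q : ℝ) ^ 4 ≤ Fintype.card L + q ^ 3 := by exact_mod_cast hB.card_lines_ge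
  have hnr : (n : ℝ) ≤ q ^ 3 := by exact_mod_cast hn
  have h43 : 2 * (q : ℝ) ^ 3 ≤ q ^ 4 := by
    rw [pow_succ (q : ℝ) 3, mul_comm]; gcongr
  have hnL : n ≤ Fintype.card L := by
    have : (n : ℝ) ≤ Fintype.card L := by linarith
    exact_mod_cast this
  obtain ⟨ω, hω⟩ := exists_labelling B q hB.card_points (incidence_count hB)
    ((mul_le_mul_of_nonneg_right hLle (Real.exp_pos _).le).trans hexp)
  set E : ℝ := Real.exp (200 * q) * (1 + 20 * (q : ℝ) ^ 3) ^ k with hE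
  set F : Fin 3 → Finset (Finset L) := fun i =>
    univ.filter fun I => I.card = s ∧ Indep (LabAdj B ω i) I with hF
  have hcount : ∀ i : Fin 3, i ≠ 0 → (F i).card * (20 / q : ℝ) ^ s ≤ E := by
    intro i hi
    have hlam : (0 : ℝ) ≤ 20 / q := by positivity
    refine (card_indep_le (LabAdj B ω i) hlam s (F i) fun I hI => (mem_filter.1 hI).2).trans ?_
    have hβ : 1 / (400 * q : ℝ) < 1 := by
      rw [div_lt_one (by positivity)]; linarith
    refine (hardCore_le (LabAdj B ω i) (β := 1 / (400 * q : ℝ)) (R := 10 * q ^ 2) hlam ?_ hβ k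
      univ ?_).trans ?_
    · intro X hX
      have hX' : 10 * q ^ 2 ≤ X.card := by exact_mod_cast hX
      have hXne : X.Nonempty := by
        rw [← card_pos]
        have : 0 < q ^ 2 := by positivity
        omega
      obtain ⟨v, hv, N, hN, h1, h2⟩ := exists_large_degree B q (by omega) hB.card_points hB.linear ω
        X hXne i hi (hω X hXne hX' i hi)
      refine ⟨v, hv, N, hN, fun w hw => ?_, h2⟩
      obtain ⟨p, a, b, c, d⟩ := h1 w hw
      exact ⟨p, a, b, Or.inl ⟨c, d⟩⟩
    · refine le_trans ?_ hk
      rw [card_univ]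
      have : (0 : ℝ) ≤ (1 - 1 / (400 * q : ℝ)) ^ k := pow_nonneg (by linarith) _
      gcongr
    · rw [hE]
      have e1 : (20 / q : ℝ) * (10 * q ^ 2) = 200 * q := by field_simp; norm_num
      have e2 : (20 / q : ℝ) * Fintype.card L ≤ 20 * q ^ 3 := by
        calc (20 / q : ℝ) * Fintype.card L ≤ 20 / q * q ^ 4 := by gcongr
          _ = _ := by field_simp
      rw [e1]
      gcongr
  -- the sampling density is small compared with the fugacity `20 / q`
  have hdens : 10 * (n : ℝ) ≤ 20 / q * Fintype.card L := by
    have : (20 / q : ℝ) * q ^ 4 = 20 * q ^ 3 := by field_simp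
    have h' : (20 / q : ℝ) * q ^ 4 ≤ 2 * (20 / q * Fintype.card L) := by
      calc (20 / q : ℝ) * q ^ 4 ≤ 20 / q * (2 * Fintype.card L) := by gcongr; linarith
        _ = _ := by ring
    linarith
  obtain ⟨W, hW, hWF⟩ := exists_sample n s (F 1 ∪ F 2)
    (fun I hI => by
      rcases mem_union.1 hI with h | h <;> exact (mem_filter.1 h).2.1) hnL (by
    have h1 : ((F 1 ∪ F 2).card : ℝ) * (20 / q : ℝ) ^ s ≤ 2 * E := by
      have : ((F 1 ∪ F 2).card : ℝ) ≤ (F 1).card + (F 2).card := by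
        exact_mod_cast card_union_le _ _
      calc _ ≤ ((F 1).card + (F 2).card : ℝ) * (20 / q : ℝ) ^ s := by gcongr
        _ ≤ 2 * E := by
          have := hcount 1 (by decide)
          have := hcount 2 (by decide)
          linarith
    have hL0 : (0 : ℝ) < Fintype.card L := by
      have : (0 : ℝ) < (q : ℝ) ^ 3 := by positivity
      linarith
    have h2 : (10 : ℝ) ^ s * ((F 1 ∪ F 2).card * (n : ℝ) ^ s) < 10 ^ s * (Fintype.card L : ℝ) ^ s :=
      calc (10 : ℝ) ^ s * ((F 1 ∪ F 2).card * (n : ℝ) ^ s)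
          = (F 1 ∪ F 2).card * (10 * (n : ℝ)) ^ s := by rw [mul_pow]; ring
        _ ≤ (F 1 ∪ F 2).card * (20 / q * Fintype.card L : ℝ) ^ s := by gcongr
        _ = (F 1 ∪ F 2).card * (20 / q : ℝ) ^ s * (Fintype.card L : ℝ) ^ s := by
          rw [mul_pow]; ring
        _ ≤ 2 * E * (Fintype.card L : ℝ) ^ s := by gcongr
        _ < _ := by gcongr
    exact lt_of_mul_lt_mul_left h2 (by positivity))
  refine colouring_of_lines hB ω n s W hW fun i hi I hI hind => hWF I ?_
  have : i = 1 ∨ i = 2 := by fin_cases i <;> simp_all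
  rcases this with rfl | rfl
  · exact mem_union_left _ (by simp [hF, hI, hind])
  · exact mem_union_right _ (by simp [hF, hI, hind])

/-- The choice `k ≈ 800 q log q` and `s ≈ 2000 q (log q) ^ 2` meets the conditions of
`exists_colouring`. -/
theorem exists_colouring_log (q n : ℕ) [hq : Fact q.Prime] (hn : n ≤ q ^ 3) (h21 : 21 ≤ q)
    (hexp : (q : ℝ) ^ 4 * Real.exp (-(q : ℝ) / 20) ≤ 1 / 4) :
    ∃ c'' : Sym2 (Fin n) → Fin 3, ¬ HasCopy c'' cP4 ∧
      ∀ X : Finset (Fin n), IsHomog c'' X → (X.card : ℝ) ≤ 2004 * q * Real.log q ^ 2 := by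
  have hqr : (21 : ℝ) ≤ q := by exact_mod_cast h21
  have hq0 : (0 : ℝ) < q := by linarith
  set ℓ := Real.log q with hℓ
  have hqe : (q : ℝ) = Real.exp ℓ := (Real.exp_log hq0).symm
  have hℓ1 : 1 ≤ ℓ := by
    rw [hℓ, Real.le_log_iff_exp_le hq0]
    have := Real.exp_one_lt_d9
    linarith
  have hℓ2 : ℓ ≤ ℓ ^ 2 := by nlinarith
  have hqℓ : (q : ℝ) ≤ q * ℓ ^ 2 := le_mul_of_one_le_right hq0.le (by linarith)
  set k := ⌈800 * q * ℓ⌉₊ with hk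
  set s := ⌈2000 * q * ℓ ^ 2⌉₊ with hs
  have hk1 : 800 * q * ℓ ≤ k := Nat.le_ceil _
  have hk2 : (k : ℝ) ≤ 800 * q * ℓ + 1 := (Nat.ceil_lt_add_one (by positivity)).le
  have hs1 : 2000 * q * ℓ ^ 2 ≤ s := Nat.le_ceil _
  have hs2 : (s : ℝ) ≤ 2000 * q * ℓ ^ 2 + 1 := (Nat.ceil_lt_add_one (by positivity)).le
  have hkcond : (1 - 1 / (400 * q : ℝ)) ^ k * (q : ℝ) ^ 4 ≤ 10 * q ^ 2 := by
    have hβ : 1 / (400 * q : ℝ) ≤ 1 := by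
      rw [div_le_one (by positivity)]; linarith
    have h1 : (1 - 1 / (400 * q : ℝ)) ^ k ≤ Real.exp (-(2 * ℓ)) := by
      calc (1 - 1 / (400 * q : ℝ)) ^ k ≤ Real.exp (-(1 / (400 * q : ℝ))) ^ k := by
            have := Real.one_sub_le_exp_neg (1 / (400 * q : ℝ))
            have : 0 ≤ 1 - 1 / (400 * q : ℝ) := by linarith
            gcongr
        _ = Real.exp (k * -(1 / (400 * q : ℝ))) := (Real.exp_nat_mul _ _).symm
        _ ≤ _ := by
            rw [Real.exp_le_exp, mul_neg, neg_le_neg_iff, mul_one_div, le_div_iff₀ (by positivity)]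
            linarith
    calc (1 - 1 / (400 * q : ℝ)) ^ k * (q : ℝ) ^ 4 ≤ Real.exp (-(2 * ℓ)) * q ^ 4 := by gcongr
      _ = (q : ℝ) ^ 2 := by
          have : Real.exp (-(2 * ℓ)) * (q : ℝ) ^ 2 = 1 := by
            rw [hqe, ← Real.exp_nat_mul, ← Real.exp_add]; norm_num
          linear_combination (q : ℝ) ^ 2 * this
      _ ≤ _ := by nlinarith [sq_nonneg (q : ℝ)]
  have hscond : 2 * (Real.exp (200 * q) * (1 + 20 * (q : ℝ) ^ 3) ^ k) < 10 ^ s := by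
    have h2 : (2 : ℝ) ≤ Real.exp 1 := by
      have := Real.add_one_le_exp (1 : ℝ); linarith
    have h10 : Real.exp 2 ≤ 10 := by
      have h := Real.exp_one_lt_d9
      have e : Real.exp 2 = Real.exp 1 * Real.exp 1 := by rw [← Real.exp_add]; norm_num
      rw [e]; nlinarith [Real.exp_pos 1]
    have hb : 1 + 20 * (q : ℝ) ^ 3 ≤ Real.exp (4 * ℓ) := by
      have : Real.exp (4 * ℓ) = (q : ℝ) ^ 4 := by
        conv_rhs => rw [hqe]
        rw [← Real.exp_nat_mul]; norm_num
      rw [this]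
      have : (1 : ℝ) ≤ (q : ℝ) ^ 3 := one_le_pow₀ (by linarith)
      nlinarith
    calc 2 * (Real.exp (200 * q) * (1 + 20 * (q : ℝ) ^ 3) ^ k)
        ≤ Real.exp 1 * (Real.exp (200 * q) * Real.exp (4 * ℓ) ^ k) := by gcongr
      _ = Real.exp (1 + (200 * q + k * (4 * ℓ))) := by
          rw [← Real.exp_nat_mul, ← Real.exp_add, ← Real.exp_add]
      _ < Real.exp (s * 2) := by
          rw [Real.exp_lt_exp]
          have : k * (4 * ℓ) ≤ (800 * q * ℓ + 1) * (4 * ℓ) := by gcongr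
          have : (21 : ℝ) * ℓ ^ 2 ≤ q * ℓ ^ 2 := by gcongr
          nlinarith
      _ = Real.exp 2 ^ s := Real.exp_nat_mul _ _
      _ ≤ 10 ^ s := by gcongr
  obtain ⟨c, hc, hX⟩ := exists_colouring q n k s hn hexp hkcond hscond
  refine ⟨c, hc, fun X h => ?_⟩
  have : (X.card : ℝ) ≤ s + 3 := by exact_mod_cast hX X h
  nlinarith

theorem exists_threshold :
    ∃ q₀ : ℕ, ∀ q : ℕ, q₀ ≤ q → (q : ℝ) ^ 4 * Real.exp (-(q : ℝ) / 20) ≤ 1 / 4 := by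
  -- `1 / 640000 = (1 / 4) / 20 ^ 4`
  have h := Real.tendsto_pow_mul_exp_neg_atTop_nhds_zero 4
  have h2 : Filter.Tendsto (fun q : ℕ => (q : ℝ) / 20) Filter.atTop Filter.atTop :=
    tendsto_natCast_atTop_atTop.atTop_div_const (by norm_num)
  have h3 := (h.comp h2).eventually (ge_mem_nhds (show (0 : ℝ) < 1 / 640000 by norm_num))
  obtain ⟨q₀, hq₀⟩ := Filter.eventually_atTop.1 h3
  refine ⟨q₀, fun q hq => ?_⟩
  have := hq₀ q hq
  simp only [Function.comp] at this
  rw [neg_div]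
  nlinarith

end Parameters

end ColouringConstruction

theorem stmt10 :
    ∃ C : ℝ, 0 < C ∧ ∃ N : ℕ, ∀ n : ℕ, N ≤ n →
      ∃ c'' : Sym2 (Fin n) → Fin 3, ¬ HasCopy c'' cP4 ∧
        ∀ X : Finset (Fin n), IsHomog c'' X →
          (X.card : ℝ) ≤ C * (n : ℝ) ^ ((1 : ℝ) / 3) * (Real.logb 2 n) ^ ((7 : ℝ) / 3) := by
  obtain ⟨q₀, hq₀⟩ := exists_threshold
  refine ⟨8016, by norm_num, (q₀ + 21) ^ 3, fun n hn => ?_⟩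
  set x : ℝ := (n : ℝ) ^ ((1 : ℝ) / 3) with hx
  have hx0 : 0 ≤ x := by positivity
  have hx3 : x ^ 3 = n := by
    rw [hx, ← Real.rpow_natCast, ← Real.rpow_mul (by positivity)]; norm_num
  have hxq : (q₀ + 21 : ℝ) ≤ x := by
    have : ((q₀ + 21 : ℝ)) ^ 3 ≤ x ^ 3 := by rw [hx3]; exact_mod_cast hn
    exact le_of_pow_le_pow_left₀ (by norm_num) hx0 this
  have hq₀0 : (0 : ℝ) ≤ q₀ := by positivity
  have hQ1 : x ≤ ⌈x⌉₊ := Nat.le_ceil x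
  have hQ2 : (⌈x⌉₊ : ℝ) < x + 1 := Nat.ceil_lt_add_one hx0
  have hQ0 : q₀ + 21 ≤ ⌈x⌉₊ := by
    have : (q₀ + 21 : ℝ) ≤ ⌈x⌉₊ := hxq.trans hQ1
    exact_mod_cast this
  -- Bertrand's postulate: a prime `q` of order `n ^ (1 / 3)` with `n ≤ q ^ 3`
  obtain ⟨q, hqp, hq1, hq2⟩ := Nat.exists_prime_lt_and_le_two_mul ⌈x⌉₊ (by omega)
  have : Fact q.Prime := ⟨hqp⟩
  have hq1' : (⌈x⌉₊ : ℝ) ≤ q := by exact_mod_cast hq1.le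
  have hq2' : (q : ℝ) ≤ 2 * ⌈x⌉₊ := by exact_mod_cast hq2
  have hnq : n ≤ q ^ 3 := by
    have : (n : ℝ) ≤ (q : ℝ) ^ 3 := by
      rw [← hx3]; gcongr; linarith
    exact_mod_cast this
  obtain ⟨c, hc, hX⟩ := exists_colouring_log q n hnq (by omega) (hq₀ q (by omega))
  refine ⟨c, hc, fun X h => (hX X h).trans ?_⟩
  have hq4 : (q : ℝ) ≤ 4 * x := by linarith
  have hq0 : (0 : ℝ) < q := by linarith
  have hqn : (q : ℝ) ≤ n := by
    rw [← hx3]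
    nlinarith [mul_nonneg hx0 hx0]
  have hn2 : (2 : ℝ) ≤ n := by linarith
  have hlog1 : 1 ≤ Real.logb 2 n := by
    rw [Real.le_logb_iff_rpow_le (by norm_num) (by linarith)]; simpa using hn2
  have hlog2 : Real.log q ≤ Real.logb 2 n := by
    have h1 : Real.log q ≤ Real.log n := Real.log_le_log hq0 hqn
    have h2 : 0 ≤ Real.log n := Real.log_nonneg (by linarith)
    have h3 : Real.log 2 ≤ 1 := by
      have := Real.log_two_lt_d9; linarith
    have h4 : 0 < Real.log 2 := Real.log_pos (by norm_num)
    rw [Real.logb, le_div_iff₀ h4]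
    nlinarith
  have hlogq : 0 ≤ Real.log q := Real.log_nonneg (by linarith)
  have hpow : Real.log q ^ 2 ≤ Real.logb 2 n ^ ((7 : ℝ) / 3) := by
    calc Real.log q ^ 2 ≤ Real.logb 2 n ^ 2 := by gcongr
      _ = Real.logb 2 n ^ (2 : ℝ) := by norm_cast
      _ ≤ _ := Real.rpow_le_rpow_of_exponent_le hlog1 (by norm_num)
  calc 2004 * q * Real.log q ^ 2 ≤ 2004 * (4 * x) * Real.logb 2 n ^ ((7 : ℝ) / 3) := by gcongr
    _ = _ := by ring
end
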